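/- arXiv:math/0501416 — 4 statements merged into one kernel-verified Lean document; each statement's English description precedes it below -/
import Mathlib

section
/- Let A and B be join-semilattices with a least element 0. Let A⁻ = A \ {0}, which is closed under joins, and let Id B denote the set of ideals of B (nonempty up-directed lower sets), which is closed under binary intersection. Let A ⊗→ B denote the set of all maps φ : A⁻ → Id B satisfying φ(a ∨ a') = φ(a) ∩ φ(a') for all a, a' ∈ A⁻, ordered pointwise by inclusion. Then the map ε defined by ε(φ) = {(x,y) ∈ A × B : x ≠ 0 and y ∈ φ(x)} ∪ ⊥_{A,B} is an order isomorphism from A ⊗→ B onto the set of all bi-ideals of A × B ordered by inclusion. -/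
variable (A B : Type*) [SemilatticeSup A] [OrderBot A] [SemilatticeSup B] [OrderBot B]

/-- `⊥_{A,B} = (A × {0}) ∪ ({0} × B)`. -/
def botPairs : Set (A × B) := {p | p.1 = ⊥ ∨ p.2 = ⊥}

/-- A bi-ideal of `A × B`: a lower set for the componentwise order that
contains `⊥_{A,B}` and is closed under lateral joins. -/
def IsBiIdeal (I : Set (A × B)) : Prop :=
  (∀ p q : A × B, p.1 ≤ q.1 → p.2 ≤ q.2 → q ∈ I → p ∈ I) ∧
  botPairs A B ⊆ I ∧
  (∀ (a : A) (b₀ b₁ : B), (a, b₀) ∈ I → (a, b₁) ∈ I → (a, b₀ ⊔ b₁) ∈ I) ∧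
  (∀ (a₀ a₁ : A) (b : B), (a₀, b) ∈ I → (a₁, b) ∈ I → (a₀ ⊔ a₁, b) ∈ I)

/-- An ideal of a poset: a nonempty, up-directed lower set. -/
def IsIdealSet (L : Type*) [Preorder L] (I : Set L) : Prop :=
  I.Nonempty ∧ (∀ x y : L, x ≤ y → y ∈ I → x ∈ I) ∧
    ∀ x ∈ I, ∀ y ∈ I, ∃ z ∈ I, x ≤ z ∧ y ≤ z

/-- `A ⊗→ B`: maps `φ` from `A⁻ = A \ {0}` to the ideals of `B` satisfying
`φ (a ∨ a') = φ a ∩ φ a'` (hence semilattice homomorphisms `⟨A⁻; ∨⟩ → ⟨Id B; ∩⟩`). -/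
abbrev HomRep := {φ : {a : A // a ≠ ⊥} → Set B //
  (∀ a, IsIdealSet B (φ a)) ∧
  ∀ a a' c : {a : A // a ≠ ⊥}, c.1 = a.1 ⊔ a'.1 → φ c = φ a ∩ φ a'}

/-- `ε(φ) = {(x,y) : x ≠ 0 and y ∈ φ(x)} ∪ ⊥_{A,B}`. -/
def eps (φ : {a : A // a ≠ ⊥} → Set B) : Set (A × B) :=
  {p : A × B | ∃ h : p.1 ≠ ⊥, p.2 ∈ φ ⟨p.1, h⟩} ∪ botPairs A B

/-!
Taking slices `I ↦ (a ↦ {y | (a, y) ∈ I})` over the nonzero `a` is right adjoint to `ε` on the sets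
containing `⊥_{A,B}`. Such a set is determined by its slices, so `ε` undoes slicing; slicing undoes
`ε` on families of sets containing `0`, in particular on families of ideals. It remains to see that
a set containing `⊥_{A,B}` is a bi-ideal exactly when its slices form an element of `A ⊗→ B`: joins
in `B` correspond to the slices being ideals, and joins in `A` to slicing turning joins into
intersections, which also makes it antitone and so accounts for lower sets in the first coordinate.
-/

section

variable {α β L : Type*}

theorem IsIdealSet.bot_mem [Preorder L] [OrderBot L] {I : Set L} (hI : IsIdealSet L I) :
    ⊥ ∈ I :=
  let ⟨⟨x, hx⟩, hlower, _⟩ := hI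
  hlower ⊥ x bot_le hx

theorem IsIdealSet.sup_mem [SemilatticeSup L] {I : Set L} (hI : IsIdealSet L I) {x y : L}
    (hx : x ∈ I) (hy : y ∈ I) : x ⊔ y ∈ I :=
  let ⟨_, hlower, hdirected⟩ := hI
  let ⟨z, hz, hxz, hyz⟩ := hdirected x hx y hy
  hlower (x ⊔ y) z (sup_le hxz hyz) hz

theorem antitone_of_map_sup_eq_inter [SemilatticeSup α] {p : α → Prop} {φ : Subtype p → Set β}
    (hφ : ∀ a a' c : Subtype p, c.1 = a.1 ⊔ a'.1 → φ c = φ a ∩ φ a') : Antitone φ :=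
  fun a a' h => (hφ a a' a' (sup_eq_right.2 h).symm).le.trans Set.inter_subset_left

/-- The family of slices `a ↦ {y | (a, y) ∈ I}` over the nonzero `a`, the candidate for the
preimage of `I` under `ε`. -/
def slices [Bot α] (I : Set (α × β)) (a : {a : α // a ≠ ⊥}) : Set β :=
  Prod.mk a.1 ⁻¹' I

end

section

variable {A B} {φ : {a : A // a ≠ ⊥} → Set B} {I : Set (A × B)}

theorem botPairs_subset_eps : botPairs A B ⊆ eps A B φ :=
  Set.subset_union_right

theorem eps_subset_iff (hI : botPairs A B ⊆ I) :
    eps A B φ ⊆ I ↔ ∀ a, φ a ⊆ slices I a where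
  mp h a _ hy := h (Or.inl ⟨a.2, hy⟩)
  mpr h := Set.union_subset (fun p ⟨hp, hy⟩ => h ⟨p.1, hp⟩ hy) hI

theorem eps_slices (hI : botPairs A B ⊆ I) : eps A B (slices I) = I := by
  refine ((eps_subset_iff hI).2 fun _ => subset_rfl).antisymm fun p hp => ?_
  by_cases h : p.1 = ⊥
  · exact botPairs_subset_eps (Or.inl h)
  · exact Or.inl ⟨h, hp⟩

theorem slices_eps_of_bot_mem (hφ : ∀ a, ⊥ ∈ φ a) : slices (eps A B φ) = φ := by
  funext a
  refine Set.Subset.antisymm ?_ ((eps_subset_iff botPairs_subset_eps).1 subset_rfl a)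
  rintro y (⟨_, hy⟩ | ha | rfl)
  · exact hy
  · exact absurd ha a.2
  · exact hφ a

theorem HomRep.slices_eps (φ : HomRep A B) : slices (eps A B φ.1) = φ.1 :=
  slices_eps_of_bot_mem fun a => (φ.2.1 a).bot_mem

theorem IsBiIdeal.isIdealSet_slices (hI : IsBiIdeal A B I) (a : {a : A // a ≠ ⊥}) :
    IsIdealSet B (slices I a) :=
  let ⟨hlower, hbot, hsup, _⟩ := hI
  ⟨⟨⊥, hbot (Or.inr rfl)⟩, fun x y hxy => hlower (a.1, x) (a.1, y) le_rfl hxy,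
    fun x hx y hy => ⟨x ⊔ y, hsup a.1 x y hx hy, le_sup_left, le_sup_right⟩⟩

theorem IsBiIdeal.slices_eq_inter (hI : IsBiIdeal A B I) (a a' c : {a : A // a ≠ ⊥})
    (hc : c.1 = a.1 ⊔ a'.1) : slices I c = slices I a ∩ slices I a' := by
  obtain ⟨hlower, -, -, hsup⟩ := hI
  have slices_subset {d : {a : A // a ≠ ⊥}} (hd : d.1 ≤ c.1) : slices I c ⊆ slices I d :=
    fun y => hlower (d.1, y) (c.1, y) hd le_rfl
  refine Set.Subset.antisymm (Set.subset_inter (slices_subset ?_) (slices_subset ?_)) ?_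
  · exact hc ▸ le_sup_left
  · exact hc ▸ le_sup_right
  · rintro y ⟨hy, hy'⟩
    change (c.1, y) ∈ I
    exact hc ▸ hsup a.1 a'.1 y hy hy'

theorem isBiIdeal_of_slices (hbot : botPairs A B ⊆ I) (hideal : ∀ a, IsIdealSet B (slices I a))
    (hinter : ∀ a a' c : {a : A // a ≠ ⊥}, c.1 = a.1 ⊔ a'.1 →
      slices I c = slices I a ∩ slices I a') :
    IsBiIdeal A B I := by
  refine ⟨?lower, hbot, ?supRight, ?supLeft⟩
  case lower =>
    rintro ⟨x, y⟩ ⟨x', y'⟩ hx hy hmem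
    by_cases h : x = ⊥
    · exact hbot (Or.inl h)
    have h' : x' ≠ ⊥ := ne_bot_of_le_ne_bot h hx
    have hy' : y' ∈ slices I ⟨x, h⟩ :=
      antitone_of_map_sup_eq_inter hinter (show ⟨x, h⟩ ≤ ⟨x', h'⟩ from hx) hmem
    exact (hideal ⟨x, h⟩).2.1 y y' hy hy'
  case supRight =>
    intro a b₀ b₁ h₀ h₁
    by_cases h : a = ⊥
    · exact hbot (Or.inl h)
    · exact (hideal ⟨a, h⟩).sup_mem h₀ h₁
  case supLeft =>
    intro a₀ a₁ b h₀ h₁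
    by_cases e₀ : a₀ = ⊥
    · rwa [e₀, bot_sup_eq]
    by_cases e₁ : a₁ = ⊥
    · rwa [e₁, sup_bot_eq]
    have h : a₀ ⊔ a₁ ≠ ⊥ := ne_bot_of_le_ne_bot e₀ le_sup_left
    exact (hinter ⟨a₀, e₀⟩ ⟨a₁, e₁⟩ ⟨a₀ ⊔ a₁, h⟩ rfl).ge ⟨h₀, h₁⟩

theorem HomRep.isBiIdeal_eps (φ : HomRep A B) : IsBiIdeal A B (eps A B φ.1) := by
  apply isBiIdeal_of_slices botPairs_subset_eps <;> rw [φ.slices_eps]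
  exacts [φ.2.1, φ.2.2]

/-- The inverse of `ε`, as a map from bi-ideals to `A ⊗→ B`. -/
def IsBiIdeal.toHomRep (hI : IsBiIdeal A B I) : HomRep A B :=
  ⟨slices I, hI.isIdealSet_slices, hI.slices_eq_inter⟩

theorem IsBiIdeal.eps_toHomRep (hI : IsBiIdeal A B I) : eps A B hI.toHomRep.1 = I :=
  eps_slices hI.2.1

theorem HomRep.eps_injective : Function.Injective fun φ : HomRep A B => eps A B φ.1 :=
  fun φ ψ (h : eps A B φ.1 = eps A B ψ.1) =>
    Subtype.ext (by rw [← φ.slices_eps, h, ψ.slices_eps])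

theorem HomRep.eps_subset_eps_iff (φ ψ : HomRep A B) :
    eps A B φ.1 ⊆ eps A B ψ.1 ↔ ∀ a, φ.1 a ⊆ ψ.1 a := by
  rw [eps_subset_iff botPairs_subset_eps, ψ.slices_eps]

end

/-- The map `ε` is an order isomorphism from `A ⊗→ B` (ordered pointwise by
inclusion) onto the set of all bi-ideals of `A × B` ordered by inclusion. -/
theorem eps_orderIso :
    (∀ φ : HomRep A B, IsBiIdeal A B (eps A B φ.1)) ∧
    Function.Injective (fun φ : HomRep A B => eps A B φ.1) ∧
    (∀ I : Set (A × B), IsBiIdeal A B I → ∃ φ : HomRep A B, eps A B φ.1 = I) ∧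
    (∀ φ ψ : HomRep A B, (∀ a, φ.1 a ⊆ ψ.1 a) ↔ eps A B φ.1 ⊆ eps A B ψ.1) :=
  ⟨HomRep.isBiIdeal_eps, HomRep.eps_injective, fun _ hI => ⟨hI.toHomRep, hI.eps_toHomRep⟩,
    fun φ ψ => (φ.eps_subset_eps_iff ψ).symm⟩
end

section
/- For every lattice L, the poset N₅[L] is a lattice. -/
/-!
The set `N₅[L]` is the family of closed points of a closure operator on `L³`: the least element of
`N₅[L]` above an arbitrary triple `(x, y, z)` is `(x ⊔ (y ⊓ (x ⊔ z)), y, x ⊔ z)`. It therefore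
inherits a lattice structure from `L³`.
-/

/-- `N₅[L] = {(x,y,z) ∈ L³ : y ∧ z ≤ x ≤ z}`, with the componentwise order. -/
abbrev N5Bracket (L : Type*) [Lattice L] :=
  {p : L × L × L // p.2.1 ⊓ p.2.2 ≤ p.1 ∧ p.1 ≤ p.2.2}

namespace N5Bracket

variable {L : Type*} [Lattice L]

/-- The closure of a triple in `N₅[L]`, that is, the least element of `N₅[L]` above it. The third
coordinate is raised above the first, and then the first above the meet of the other two. -/
def closure (p : L × L × L) : N5Bracket L :=
  ⟨(p.1 ⊔ (p.2.1 ⊓ (p.1 ⊔ p.2.2)), p.2.1, p.1 ⊔ p.2.2),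
    le_sup_right, sup_le le_sup_left inf_le_right⟩

theorem le_closure (p : L × L × L) : p ≤ closure p :=
  ⟨le_sup_left, le_rfl, le_sup_right⟩

theorem closure_le {p : L × L × L} {q : N5Bracket L} (h : p ≤ q) : closure p ≤ q := by
  obtain ⟨⟨a, b, c⟩, hbc, hac⟩ := q
  obtain ⟨ha, hb, hc⟩ := h
  have hsup : p.1 ⊔ p.2.2 ≤ c := sup_le (ha.trans hac) hc
  have hinf : p.2.1 ⊓ (p.1 ⊔ p.2.2) ≤ a := (inf_le_inf hb hsup).trans hbc
  exact ⟨sup_le ha hinf, hb, hsup⟩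

theorem gc_closure_val : GaloisConnection (closure (L := L)) Subtype.val :=
  fun p _ => ⟨(le_closure p).trans, closure_le⟩

/-- The reflection of `L³` onto `N₅[L]`, which transports the lattice operations of `L³`. -/
def giClosureVal : GaloisInsertion (closure (L := L)) Subtype.val :=
  gc_closure_val.toGaloisInsertion fun q => le_closure q.val

instance instLattice : Lattice (N5Bracket L) :=
  giClosureVal.liftLattice

end N5Bracket

/-- For every lattice `L`, the poset `N₅[L]` is a lattice: every pair of elements
has a least upper bound and a greatest lower bound. -/
theorem N5Bracket_isLattice (L : Type*) [Lattice L] :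
    ∀ s t : N5Bracket L, (∃ z, IsLUB {s, t} z) ∧ (∃ w, IsGLB {s, t} w) :=
  fun s t => ⟨⟨s ⊔ t, isLUB_pair⟩, ⟨s ⊓ t, isGLB_pair⟩⟩
end

section
/- A finite join-semilattice S is sharply transferable if and only if S satisfies condition (T). -/
universe u

/-- `p` is join-irreducible: `p` is not a least element and `p = b ∨ c`
implies `p = b` or `p = c`. -/
def SJoinIrr (S : Type*) [SemilatticeSup S] (p : S) : Prop :=
  ¬ IsBot p ∧ ∀ b c : S, b ⊔ c = p → b = p ∨ c = p

/-- A minimal pair `(p, I)`: `p ∈ J(S)`, `I ⊆ J(S)`, `|I| ≥ 2`, `p ∉ I`, `p ≤ ⋁I`, and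
for every `J ⊆ J(S)`, if `J ≪ I` and `p ≤ ⋁J`, then `I ⊆ J`. -/
def SMinimalPair (S : Type*) [SemilatticeSup S] (p : S) (I : Finset S) : Prop :=
  SJoinIrr S p ∧ (∀ q ∈ I, SJoinIrr S q) ∧ 2 ≤ I.card ∧ p ∉ I ∧
  (∃ hI : I.Nonempty, p ≤ I.sup' hI id) ∧
  ∀ (J : Finset S) (hJ : J.Nonempty), (∀ q ∈ J, SJoinIrr S q) →
    (∀ x ∈ J, ∃ y ∈ I, x ≤ y) → p ≤ J.sup' hJ id → I ⊆ J

/-- Condition (T): there is a linear order `r` on the join-irreducible elements such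
that `r p j` for every minimal pair `(p, I)` and every `j ∈ I`. -/
def CondT (S : Type*) [SemilatticeSup S] : Prop :=
  ∃ r : S → S → Prop,
    (∀ p, SJoinIrr S p → r p p) ∧
    (∀ p q, SJoinIrr S p → SJoinIrr S q → r p q → r q p → p = q) ∧
    (∀ p q s, SJoinIrr S p → SJoinIrr S q → SJoinIrr S s → r p q → r q s → r p s) ∧
    (∀ p q, SJoinIrr S p → SJoinIrr S q → r p q ∨ r q p) ∧
    (∀ (p : S) (I : Finset S), SMinimalPair S p I → ∀ j ∈ I, r p j)

/-!
**Condition (T) implies sharp transferability.** Pick `a q ∈ φ q` lying in `φ y` only if `q ≤ y`.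
If `(p, I)` is a minimal pair and `v ∈ φ p ⊆ φ (⋁ I)`, then `v` lies below a join of elements of the
ideals `φ i`, `i ∈ I`. Since (T) makes the relation `(p, I) is a minimal pair and j ∈ I` between `p`
and `j` well-founded, one can choose `g q ∈ φ q` above `a q` recursively so that `g p ≤ ⋁ g(I)` for
every minimal pair. Then `ψ x = ⋁ {g q | q ≤ x}`, with `q` irreducible, preserves joins, because an
irreducible element below `x ⊔ y` but below neither `x` nor `y` has a minimal pair refining
`{x, y}`.

**Sharp transferability implies (T).** Take for `L` the semilattice of sets `A ⊆ S × ℕ` of bounded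
level in which `z ≤ x ⊔ y` and `(x, m + 1), (y, m + 1) ∈ A` imply `(z, m) ∈ A`, so that a join costs
one level, and let `φ x` consist of the sets living below `x`. For a sharp `ψ` and an irreducible
`p`, let `ℓ p` be the largest `n` with `(p, n) ∈ ψ p`. If `(p, I)` is a minimal pair, then
`(p, ℓ p) ∈ ψ (⋁ I)` is derived from elements of the `ψ i`, `i ∈ I`, of level above `ℓ p`. By
minimality every `i ∈ I` is among these elements, hence `ℓ p < ℓ i`.
-/

section JoinCover

variable {α : Type*} [Preorder α] {C D : Set α} {p : α}

/-- `C` is a join cover of `p`, that is, `p ≤ ⋁ C`. In terms of upper bounds this makes sense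
without any join existing; the empty set covers exactly the least elements. -/
def IsJoinCover (C : Set α) (p : α) : Prop :=
  p ∈ lowerBounds (upperBounds C)

theorem isJoinCover_of_le {c : α} (hc : c ∈ C) (hpc : p ≤ c) : IsJoinCover C p :=
  fun _ ht => hpc.trans (ht hc)

theorem IsJoinCover.of_isCofinalFor (hC : IsJoinCover C p) (hCD : IsCofinalFor C D) :
    IsJoinCover D p :=
  fun _ ht => hC (upperBounds_mono_of_isCofinalFor hCD ht)

theorem IsJoinCover.mono (hC : IsJoinCover C p) (hCD : C ⊆ D) : IsJoinCover D p :=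
  hC.of_isCofinalFor (.of_subset hCD)

theorem IsJoinCover.trans (hC : IsJoinCover C p) (hD : ∀ c ∈ C, IsJoinCover D c) :
    IsJoinCover D p :=
  fun _ ht => hC fun c hc => hD c hc ht

theorem IsJoinCover.nonempty (hC : IsJoinCover C p) (hp : ¬ IsBot p) : C.Nonempty := by
  by_contra hempty
  rw [Set.not_nonempty_iff_eq_empty] at hempty
  exact hp fun t => hC (by simp [hempty])

theorem IsJoinCover.nontrivial (hC : IsJoinCover C p) (hp : ¬ IsBot p) (hpC : ∀ c ∈ C, ¬ p ≤ c) :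
    C.Nontrivial := by
  by_contra htriv
  obtain ⟨c, hc⟩ := hC.nonempty hp
  exact hpC c hc (hC fun d hd => (Set.not_nontrivial_iff.1 htriv hd hc).le)

end JoinCover

theorem isJoinCover_coe_iff {α : Type*} [SemilatticeSup α] {I : Finset α} (hI : I.Nonempty)
    {p : α} : IsJoinCover (I : Set α) p ↔ p ≤ I.sup' hI id :=
  ⟨fun h => h fun _ hi => Finset.le_sup' id hi,
    fun h _ ht => h.trans (Finset.sup'_le hI id fun _ hi => ht hi)⟩

theorem isJoinCover_pair_iff {α : Type*} [SemilatticeSup α] {x y p : α} :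
    IsJoinCover {x, y} p ↔ p ≤ x ⊔ y :=
  ⟨fun h => h (by simp), fun h _ ht => h.trans (sup_le (ht (by simp)) (ht (by simp)))⟩

-- Among the lower sets covering `p`, take a minimal one; its maximal elements are as required.
theorem exists_minimal_joinCover {α : Type*} [PartialOrder α] [Finite α] {C : Set α} {p : α}
    (hC : IsJoinCover C p) :
    ∃ I, IsCofinalFor I C ∧ IsJoinCover I p ∧
      ∀ J, IsCofinalFor J I → IsJoinCover J p → I ⊆ J := by
  have : Finite (LowerSet α) := Finite.of_injective _ SetLike.coe_injective
  obtain ⟨D, hDC, hD⟩ := exists_minimal_le_of_wellFoundedLT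
    (fun D : LowerSet α => IsJoinCover (D : Set α) p) (lowerClosure C) (hC.mono subset_lowerClosure)
  have hDI : IsCofinalFor (D : Set α) {i | Maximal (· ∈ D) i} := fun d hd => by
    obtain ⟨i, hdi, hi⟩ := (D : Set α).toFinite.exists_le_maximal hd
    exact ⟨i, hi, hdi⟩
  refine ⟨{i | Maximal (· ∈ D) i}, fun i hi => hDC hi.prop, hD.prop.of_isCofinalFor hDI,
    fun J hJI hJ i hi => ?_⟩
  have hJD : J ⊆ D := fun j hj =>
    let ⟨_, hk, hjk⟩ := hJI hj
    D.lower hjk hk.prop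
  have hDJ : D ≤ lowerClosure J :=
    hD.le_of_le (hJ.mono subset_lowerClosure) (lowerClosure_min hJD D.lower)
  obtain ⟨j, hj, hij⟩ := hDJ hi.prop
  rwa [hi.eq_of_le (hJD hj) hij]

section Irreducible

variable {S : Type*} [SemilatticeSup S]

/-- `p` is not the join of two other elements. Unlike `SJoinIrr`, this allows `p` to be the least
element; every element of a finite join-semilattice is a nonempty join of such elements. -/
def IsJoinIndecomposable (p : S) : Prop :=
  ∀ b c : S, b ⊔ c = p → b = p ∨ c = p

/-- The join-indecomposable elements below `x`. -/
def indecomposablesBelow (x : S) : Set S :=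
  {q | IsJoinIndecomposable q ∧ q ≤ x}

/-- The join-irreducible elements lying below some element of `C`. -/
def irreduciblesBelow (C : Set S) : Set S :=
  {q | SJoinIrr S q ∧ ∃ c ∈ C, q ≤ c}

theorem irreduciblesBelow_isCofinalFor (C : Set S) : IsCofinalFor (irreduciblesBelow C) C :=
  fun _ hq => hq.2

theorem indecomposablesBelow_mono {x y : S} (h : x ≤ y) :
    indecomposablesBelow x ⊆ indecomposablesBelow y :=
  fun _ hq => ⟨hq.1, hq.2.trans h⟩

theorem isJoinCover_indecomposablesBelow [WellFoundedLT S] (x : S) :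
    IsJoinCover (indecomposablesBelow x) x := by
  induction x using WellFoundedLT.induction with
  | ind x ih =>
    by_cases hx : IsJoinIndecomposable x
    · exact isJoinCover_of_le ⟨hx, le_rfl⟩ le_rfl
    · unfold IsJoinIndecomposable at hx
      push Not at hx
      obtain ⟨b, c, rfl, hb, hc⟩ := hx
      refine (isJoinCover_pair_iff.2 le_rfl).trans ?_
      rintro _ (rfl | rfl)
      · exact (ih _ (lt_of_le_of_ne le_sup_left hb)).mono (indecomposablesBelow_mono le_sup_left)
      · exact (ih _ (lt_of_le_of_ne le_sup_right hc)).mono (indecomposablesBelow_mono le_sup_right)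

theorem indecomposablesBelow_nonempty [WellFoundedLT S] (x : S) :
    (indecomposablesBelow x).Nonempty := by
  obtain ⟨q, hqx, hq⟩ := exists_minimal_le_of_wellFoundedLT (fun _ : S => True) x trivial
  exact ⟨q, fun b c hbc => .inl (hq.eq_of_le trivial (hbc ▸ le_sup_left)), hqx⟩

theorem IsJoinCover.irreduciblesBelow [WellFoundedLT S] {C : Set S} {p : S}
    (hC : IsJoinCover C p) : IsJoinCover (irreduciblesBelow C) p := by
  refine hC.trans fun c hc => (isJoinCover_indecomposablesBelow c).trans fun q hq => ?_
  by_cases hbot : IsBot q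
  · exact fun t _ => hbot t
  · exact isJoinCover_of_le ⟨⟨hbot, hq.1⟩, c, hc, hq.2⟩ le_rfl

theorem SJoinIrr.mem_of_isJoinCover {p : S} (hp : SJoinIrr S p) {C : Set S} (hfin : C.Finite)
    (hC : IsJoinCover C p) (hCp : C ⊆ Set.Iic p) : p ∈ C := by
  by_contra hpC
  lift C to Finset S using hfin
  have hne : C.Nonempty := hC.nonempty hp.1
  have hlt : C.sup' hne id < p := by
    refine Finset.sup'_induction (p := (· < p)) hne id (fun x hx y hy => ?_)
      fun c hc => (hCp hc : c ≤ p).lt_of_ne fun h => hpC (h ▸ hc)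
    exact (sup_le hx.le hy.le).lt_of_ne fun hxy => (hp.2 x y hxy).elim hx.ne hy.ne
  exact hlt.not_ge ((isJoinCover_coe_iff hne).1 hC)

end Irreducible

section MinimalPair

variable {S : Type*} [SemilatticeSup S] {p : S} {I : Finset S}

theorem SMinimalPair.isJoinCover (h : SMinimalPair S p I) : IsJoinCover (I : Set S) p :=
  let ⟨hI, hpI⟩ := h.2.2.2.2.1
  (isJoinCover_coe_iff hI).2 hpI

theorem SMinimalPair.subset_of_forall_sJoinIrr (h : SMinimalPair S p I) {J : Finset S}
    (hJ : ∀ q ∈ J, SJoinIrr S q) (hJI : IsCofinalFor (J : Set S) I)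
    (hpJ : IsJoinCover (J : Set S) p) : I ⊆ J :=
  have hne : J.Nonempty := hpJ.nonempty h.1.1
  h.2.2.2.2.2 J hne hJ (fun _ hx => hJI hx) ((isJoinCover_coe_iff hne).1 hpJ)

theorem SMinimalPair.not_le (h : SMinimalPair S p I) {i : S} (hi : i ∈ I) : ¬ p ≤ i := by
  intro hpi
  have hsub : I ⊆ {p} := h.subset_of_forall_sJoinIrr (by simpa using h.1)
    (by simpa [IsCofinalFor] using ⟨i, hi, hpi⟩) (isJoinCover_of_le (by simp) le_rfl)
  exact h.2.2.2.1 (Finset.mem_singleton.1 (hsub hi) ▸ hi)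

theorem SMinimalPair.isAntichain (h : SMinimalPair S p I) : IsAntichain (· ≤ ·) (I : Set S) := by
  classical
  intro i hi j hj hne hij
  have hcov : IsJoinCover (I.erase i : Set S) p := h.isJoinCover.of_isCofinalFor fun q hq => by
    by_cases hqi : q = i
    · exact ⟨j, Finset.mem_erase.2 ⟨hne.symm, hj⟩, hqi ▸ hij⟩
    · exact ⟨q, Finset.mem_erase.2 ⟨hqi, hq⟩, le_rfl⟩
  have hsub : I ⊆ I.erase i := h.subset_of_forall_sJoinIrr
    (fun q hq => h.2.1 q (Finset.mem_of_mem_erase hq))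
    (.of_subset (Finset.coe_subset.2 (I.erase_subset i))) hcov
  exact Finset.notMem_erase i I (hsub hi)

theorem SMinimalPair.subset_of_isCofinalFor [Finite S] (h : SMinimalPair S p I) {J : Set S}
    (hJI : IsCofinalFor J I) (hpJ : IsJoinCover J p) : (I : Set S) ⊆ J := by
  intro i hi
  have hsub : I ⊆ (irreduciblesBelow J).toFinite.toFinset := h.subset_of_forall_sJoinIrr
    (fun q hq => ((Set.Finite.mem_toFinset _).1 hq).1)
    (by simpa using (irreduciblesBelow_isCofinalFor J).trans hJI)
    (by simpa using hpJ.irreduciblesBelow)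
  obtain ⟨-, j, hj, hij⟩ := (Set.Finite.mem_toFinset _).1 (hsub hi)
  obtain ⟨k, hk, hjk⟩ := hJI hj
  obtain rfl : i = k := h.isAntichain.eq hi hk (hij.trans hjk)
  rwa [hij.antisymm hjk]

theorem exists_sMinimalPair [Finite S] (hp : SJoinIrr S p) {C : Set S} (hC : IsJoinCover C p)
    (hpC : ∀ c ∈ C, ¬ p ≤ c) : ∃ I : Finset S, SMinimalPair S p I ∧ IsCofinalFor (I : Set S) C := by
  obtain ⟨I, hIC, hI, hmin⟩ := exists_minimal_joinCover hC
  lift I to Finset S using I.toFinite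
  have hirr : ∀ i ∈ I, SJoinIrr S i := fun i hi =>
    (hmin _ (irreduciblesBelow_isCofinalFor _) hI.irreduciblesBelow hi).1
  have hpI : ∀ i ∈ I, ¬ p ≤ i := fun i hi hpi =>
    let ⟨c, hc, hic⟩ := hIC hi
    hpC c hc (hpi.trans hic)
  have hne : I.Nonempty := hI.nonempty hp.1
  exact ⟨I, ⟨hp, hirr, Finset.one_lt_card_iff_nontrivial.2 (hI.nontrivial hp.1 hpI),
    fun h => hpI p h le_rfl, ⟨hne, (isJoinCover_coe_iff hne).1 hI⟩,
    fun J hJ _ hJI hpJ => hmin J (fun q hq => hJI q hq) ((isJoinCover_coe_iff hJ).2 hpJ)⟩, hIC⟩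

/-- The dependency relation of `S`: `j` occurs in a minimal pair of `p`. Condition (T) says that
this relation has no cycles. -/
def JoinDependency (S : Type*) [SemilatticeSup S] (p j : S) : Prop :=
  ∃ I, SMinimalPair S p I ∧ j ∈ I

theorem CondT.wellFounded_joinDependency [Finite S] (hT : CondT S) :
    WellFounded (JoinDependency S) := by
  obtain ⟨r, -, hanti, htrans, -, hpair⟩ := hT
  let R : S → S → Prop := fun p q => SJoinIrr S p ∧ SJoinIrr S q ∧ r p q ∧ p ≠ q
  have : IsTrans S R := ⟨by
    rintro p q s ⟨hp, hq, hpq, hne⟩ ⟨-, hs, hqs, -⟩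
    refine ⟨hp, hs, htrans p q s hp hq hs hpq hqs, ?_⟩
    rintro rfl
    exact hne (hanti p q hp hq hpq hqs)⟩
  have : Std.Irrefl R := ⟨fun p h => h.2.2.2 rfl⟩
  refine Subrelation.wf ?_ (Finite.wellFounded_of_trans_of_irrefl R)
  rintro p j ⟨I, h, hj⟩
  exact ⟨h.1, h.2.1 j hj, hpair p I h j hj, fun hpj => h.2.2.2.1 (hpj ▸ hj)⟩

theorem condT_of_wellFounded_joinDependency (hwf : WellFounded (JoinDependency S)) : CondT S := by
  have : IsPartialOrder S (Relation.ReflTransGen (JoinDependency S)) :=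
    { refl := fun _ => .refl
      trans := fun _ _ _ => .trans
      antisymm := fun p q hpq hqp => by
        by_contra hne
        have hpq' := (Relation.reflTransGen_iff_eq_or_transGen.1 hpq).resolve_left (Ne.symm hne)
        have hqp' := (Relation.reflTransGen_iff_eq_or_transGen.1 hqp).resolve_left hne
        exact hwf.transGen.asymmetric _ _ hpq' hqp' }
  obtain ⟨r, hr, hle⟩ := extend_partialOrder (Relation.ReflTransGen (JoinDependency S))
  exact ⟨r, fun p _ => refl_of r p, fun _ _ _ _ => antisymm_of r,
    fun _ _ _ _ _ _ => trans_of r, fun p q _ _ => total_of r p q,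
    fun p I h j hj => hle p j (.single ⟨I, h, hj⟩)⟩

end MinimalPair

section IdealHom

theorem IsIdealSet.exists_forall_le {L ι : Type*} [Preorder L] [Finite ι] {I : Set L}
    (hI : IsIdealSet L I) {b : ι → L} (hb : ∀ i, b i ∈ I) : ∃ v ∈ I, ∀ i, b i ≤ v := by
  have : Nonempty I := hI.1.to_subtype
  have hdir : DirectedOn (· ≤ ·) I := hI.2.2
  obtain ⟨⟨v, hv⟩, hbv⟩ := hdir.directed_val.finite_le fun i => ⟨b i, hb i⟩
  exact ⟨v, hv, hbv⟩

variable {S L : Type*} [SemilatticeSup S] [SemilatticeSup L] {φ : S → Set L}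

theorem IsIdealSet.sup_mem_s3 {I : Set L} (hI : IsIdealSet L I) {a b : L} (ha : a ∈ I) (hb : b ∈ I) :
    a ⊔ b ∈ I := by
  obtain ⟨z, hz, haz, hbz⟩ := hI.2.2 a ha b hb
  exact hI.2.1 _ _ (sup_le haz hbz) hz

theorem IsIdealSet.sup {I J : Set L} (hI : IsIdealSet L I) (hJ : IsIdealSet L J) :
    IsIdealSet L {v | ∃ a ∈ I, ∃ b ∈ J, v ≤ a ⊔ b} := by
  obtain ⟨⟨a₀, ha₀⟩, ⟨b₀, hb₀⟩⟩ := And.intro hI.1 hJ.1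
  refine ⟨⟨a₀ ⊔ b₀, a₀, ha₀, b₀, hb₀, le_rfl⟩, ?_, ?_⟩
  · rintro x y hxy ⟨a, ha, b, hb, hy⟩
    exact ⟨a, ha, b, hb, hxy.trans hy⟩
  · rintro x ⟨a, ha, b, hb, hx⟩ y ⟨a', ha', b', hb', hy⟩
    exact ⟨x ⊔ y, ⟨a ⊔ a', hI.sup_mem_s3 ha ha', b ⊔ b', hJ.sup_mem_s3 hb hb',
      (sup_le_sup hx hy).trans_eq (sup_sup_sup_comm a b a' b')⟩, le_sup_left, le_sup_right⟩

/-- `φ` is a join-homomorphism from `S` to the ideals of `L`. Joins of ideals are described as least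
ideals containing both, as `L` need not have the binary meets that make `Id L` a lattice. -/
structure IsIdealHom (φ : S → Set L) : Prop where
  isIdealSet : ∀ x, IsIdealSet L (φ x)
  isLeast_sup : ∀ x y, IsLeast {I : Set L | IsIdealSet L I ∧ φ x ∪ φ y ⊆ I} (φ (x ⊔ y))

theorem IsIdealHom.mono (hφ : IsIdealHom φ) : Monotone φ := fun x y h => by
  have hsub := Set.subset_union_left.trans (hφ.isLeast_sup x y).1.2
  rwa [sup_eq_right.2 h] at hsub

theorem IsIdealHom.le_of_subset (hφ : IsIdealHom φ) (hinj : Function.Injective φ) {x y : S}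
    (h : φ x ⊆ φ y) : x ≤ y := by
  have hsup : φ (x ⊔ y) ⊆ φ y :=
    (hφ.isLeast_sup x y).2 ⟨hφ.isIdealSet y, Set.union_subset h subset_rfl⟩
  exact sup_eq_right.1 (hinj (hsup.antisymm (hφ.mono le_sup_right)))

theorem IsIdealHom.exists_le_sup (hφ : IsIdealHom φ) {x y : S} {v : L} (hv : v ∈ φ (x ⊔ y)) :
    ∃ a ∈ φ x, ∃ b ∈ φ y, v ≤ a ⊔ b := by
  obtain ⟨⟨a₀, ha₀⟩, ⟨b₀, hb₀⟩⟩ := And.intro (hφ.isIdealSet x).1 (hφ.isIdealSet y).1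
  refine (hφ.isLeast_sup x y).2 ⟨(hφ.isIdealSet x).sup (hφ.isIdealSet y), ?_⟩ hv
  exact Set.union_subset (fun a ha => ⟨a, ha, b₀, hb₀, le_sup_left⟩)
    fun b hb => ⟨a₀, ha₀, b, hb, le_sup_right⟩

theorem IsIdealHom.exists_le_sup' (hφ : IsIdealHom φ) {I : Finset S} (hI : I.Nonempty) {v : L}
    (hv : v ∈ φ (I.sup' hI id)) : ∃ c : S → L, (∀ i ∈ I, c i ∈ φ i) ∧ v ≤ I.sup' hI c := by
  classical
  induction hI using Finset.Nonempty.cons_induction generalizing v with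
  | singleton i => exact ⟨fun _ => v, by simpa using hv, by simp⟩
  | cons i I hi hI ih =>
    rw [Finset.sup'_cons hI] at hv
    obtain ⟨a, ha, b, hb, hvab⟩ := hφ.exists_le_sup hv
    obtain ⟨c, hc, hbc⟩ := ih hb
    have hupdate : ∀ k ∈ I, Function.update c i a k = c k := fun k hk =>
      Function.update_of_ne (ne_of_mem_of_not_mem hk hi) a c
    refine ⟨Function.update c i a, ?_, ?_⟩
    · simp only [Finset.mem_cons, forall_eq_or_imp, Function.update_self]
      exact ⟨ha, fun k hk => (hupdate k hk).symm ▸ hc k hk⟩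
    · rw [Finset.sup'_cons hI, Function.update_self, Finset.sup'_congr hI rfl hupdate]
      exact hvab.trans (sup_le_sup_left hbc a)

theorem IsIdealHom.exists_isJoinCover_image (hφ : IsIdealHom φ) {p : S} {I : Finset S}
    (hI : I.Nonempty) (hpI : IsJoinCover (I : Set S) p) {v : L} (hv : v ∈ φ p) :
    ∃ c : S → L, (∀ i ∈ I, c i ∈ φ i) ∧ IsJoinCover (c '' I) v := by
  obtain ⟨c, hc, hvc⟩ := hφ.exists_le_sup' hI (hφ.mono ((isJoinCover_coe_iff hI).1 hpI) hv)
  exact ⟨c, hc, fun t ht => hvc.trans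
    (Finset.sup'_le hI c fun i hi => ht (Set.mem_image_of_mem c hi))⟩

theorem IsIdealHom.exists_separating [Finite S] (hφ : IsIdealHom φ) (hinj : Function.Injective φ)
    (q : S) : ∃ a ∈ φ q, ∀ y, a ∈ φ y → q ≤ y := by
  have hsep : ∀ y, ∃ b ∈ φ q, b ∈ φ y → q ≤ y := fun y => by
    by_cases h : φ q ⊆ φ y
    · obtain ⟨b, hb⟩ := (hφ.isIdealSet q).1
      exact ⟨b, hb, fun _ => hφ.le_of_subset hinj h⟩
    · obtain ⟨b, hb, hby⟩ := Set.not_subset.1 h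
      exact ⟨b, hb, fun h' => absurd h' hby⟩
  choose b hb hby using hsep
  obtain ⟨a, ha, hba⟩ := (hφ.isIdealSet q).exists_forall_le hb
  exact ⟨a, ha, fun y hy => hby y ((hφ.isIdealSet y).2.1 _ _ (hba y) hy)⟩

end IdealHom

section SharpLift

theorem exists_choice_of_wellFounded {ι : Sort*} {α : ι → Sort*} {R : ι → ι → Prop}
    (hR : WellFounded R) {P : ∀ j, (∀ i, R i j → α i) → α j → Prop}
    (hP : ∀ j f, ∃ v, P j f v) : ∃ g : ∀ j, α j, ∀ j, P j (fun i _ => g i) (g j) := by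
  choose F hF using hP
  refine ⟨hR.fix F, fun j => ?_⟩
  rw [hR.fix_eq F j]
  exact hF j _

variable {S L : Type*} [SemilatticeSup S] [Finite S] [SemilatticeSup L] {φ : S → Set L}

theorem IsIdealHom.exists_compatible_choice (hφ : IsIdealHom φ)
    (hwf : WellFounded (JoinDependency S)) {a : S → L} (ha : ∀ q, a q ∈ φ q) :
    ∃ g : S → L, (∀ q, g q ∈ φ q) ∧ (∀ q, a q ≤ g q) ∧
      ∀ p I, SMinimalPair S p I → IsJoinCover (g '' I) (g p) := by
  have hcover : ∀ p I (v : φ p), SMinimalPair S p I →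
      ∃ c : S → L, (∀ i ∈ I, c i ∈ φ i) ∧ IsJoinCover (c '' I) (v : L) := fun p I v h =>
    hφ.exists_isJoinCover_image h.2.2.2.2.1.1 h.isJoinCover v.2
  choose c hcφ hc using hcover
  have hstep : ∀ j (f : ∀ p, JoinDependency S p j → φ p), ∃ v : φ j, a j ≤ v ∧
      ∀ p I (h : SMinimalPair S p I) (hj : j ∈ I), c p I (f p ⟨I, h, hj⟩) h j ≤ v := by
    intro j f
    obtain ⟨v, hv, hcv⟩ := (hφ.isIdealSet j).exists_forall_le
      (ι := {x : S × Finset S // SMinimalPair S x.1 x.2 ∧ j ∈ x.2})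
      fun x => hcφ x.1.1 x.1.2 (f x.1.1 ⟨x.1.2, x.2⟩) x.2.1 j x.2.2
    exact ⟨⟨a j ⊔ v, (hφ.isIdealSet j).sup_mem_s3 (ha j) hv⟩, le_sup_left,
      fun p I h hj => (hcv ⟨(p, I), h, hj⟩).trans le_sup_right⟩
  obtain ⟨g, hg⟩ := exists_choice_of_wellFounded hwf hstep
  refine ⟨fun q => g q, fun q => (g q).2, fun q => (hg q).1, fun p I h => ?_⟩
  refine (hc p I (g p) h).of_isCofinalFor ?_
  rintro _ ⟨i, hi, rfl⟩
  exact ⟨g i, Set.mem_image_of_mem _ hi, (hg i).2 p I h hi⟩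

/-- The join of the values of `g` at the join-indecomposable elements below `x`: the only candidate
for a join-homomorphism agreeing with `g` at these elements. -/
noncomputable def joinExtension (g : S → L) (x : S) : L :=
  (indecomposablesBelow x).toFinite.toFinset.sup'
    ((Set.Finite.toFinset_nonempty _).2 (indecomposablesBelow_nonempty x)) g

theorem joinExtension_le_iff {g : S → L} {x : S} {t : L} :
    joinExtension g x ≤ t ↔ ∀ q ∈ indecomposablesBelow x, g q ≤ t := by
  simp [joinExtension]

theorem le_joinExtension (g : S → L) {x q : S} (hq : q ∈ indecomposablesBelow x) :
    g q ≤ joinExtension g x :=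
  joinExtension_le_iff.1 le_rfl q hq

theorem joinExtension_mono (g : S → L) : Monotone (joinExtension g) := fun _ _ h =>
  joinExtension_le_iff.2 fun _ hq => le_joinExtension g (indecomposablesBelow_mono h hq)

theorem joinExtension_sup {g : S → L}
    (hg : ∀ p I, SMinimalPair S p I → IsJoinCover (g '' I) (g p)) (x y : S) :
    joinExtension g (x ⊔ y) = joinExtension g x ⊔ joinExtension g y := by
  refine le_antisymm (joinExtension_le_iff.2 fun q ⟨hq, hqxy⟩ => ?_)
    (sup_le (joinExtension_mono g le_sup_left) (joinExtension_mono g le_sup_right))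
  by_cases hqx : q ≤ x
  · exact (le_joinExtension g ⟨hq, hqx⟩).trans le_sup_left
  by_cases hqy : q ≤ y
  · exact (le_joinExtension g ⟨hq, hqy⟩).trans le_sup_right
  obtain ⟨I, hI, hIxy⟩ := exists_sMinimalPair ⟨fun hbot => hqx (hbot x), hq⟩
    (isJoinCover_pair_iff.2 hqxy) (by simp [hqx, hqy])
  refine hg q I hI ?_
  rintro _ ⟨i, hi, rfl⟩
  have hind : IsJoinIndecomposable i := (hI.2.1 i hi).2
  obtain ⟨_, rfl | rfl, hix⟩ := hIxy hi
  · exact (le_joinExtension g ⟨hind, hix⟩).trans le_sup_left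
  · exact (le_joinExtension g ⟨hind, hix⟩).trans le_sup_right

theorem IsIdealHom.joinExtension_mem (hφ : IsIdealHom φ) {g : S → L} (hg : ∀ q, g q ∈ φ q)
    (x : S) : joinExtension g x ∈ φ x :=
  Finset.sup'_mem (φ x) (fun _ ha _ hb => (hφ.isIdealSet x).sup_mem_s3 ha hb) _ _ _ fun q hq =>
    hφ.mono ((Set.Finite.mem_toFinset _).1 hq).2 (hg q)

theorem IsIdealHom.exists_sharp_lift (hφ : IsIdealHom φ) (hinj : Function.Injective φ)
    (hwf : WellFounded (JoinDependency S)) :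
    ∃ ψ : S → L, Function.Injective ψ ∧ (∀ x y, ψ (x ⊔ y) = ψ x ⊔ ψ y) ∧
      ∀ x y, ψ x ∈ φ y ↔ x ≤ y := by
  choose a ha hsep using hφ.exists_separating hinj
  obtain ⟨g, hgφ, hag, hg⟩ := hφ.exists_compatible_choice hwf ha
  have hmem : ∀ x y, joinExtension g x ∈ φ y ↔ x ≤ y := by
    refine fun x y => ⟨fun h => ?_, fun h => hφ.mono h (hφ.joinExtension_mem hgφ x)⟩
    refine isJoinCover_indecomposablesBelow x fun q hq => hsep q y ?_
    exact (hφ.isIdealSet y).2.1 _ _ ((hag q).trans (le_joinExtension g hq)) h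
  refine ⟨joinExtension g, fun x y h => le_antisymm ?_ ?_, joinExtension_sup hg, hmem⟩
  · exact (hmem x y).1 (h ▸ (hmem y y).2 le_rfl)
  · exact (hmem y x).1 (h ▸ (hmem x x).2 le_rfl)

end SharpLift

section LevelSet

variable {S : Type*} [SemilatticeSup S]

/-- Closedness of a subset of `S × ℕ` under joins costing one level: everything below the join of
two elements of level `m + 1` is present at level `m`. -/
def LevelClosed (A : Set (S × ℕ)) : Prop :=
  ∀ x y z m, (x, m + 1) ∈ A → (y, m + 1) ∈ A → z ≤ x ⊔ y → (z, m) ∈ A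

theorem levelClosed_setOf_fst_le (x : S) : LevelClosed {a : S × ℕ | a.1 ≤ x} :=
  fun _ _ _ _ hx hy hz => hz.trans (sup_le hx hy)

theorem levelClosed_setOf_snd_le (N : ℕ) : LevelClosed {a : S × ℕ | a.2 ≤ N} :=
  fun _ _ _ _ hx _ _ => Nat.le_of_succ_le hx

theorem LevelClosed.inter {A B : Set (S × ℕ)} (hA : LevelClosed A) (hB : LevelClosed B) :
    LevelClosed (A ∩ B) :=
  fun x y z m hx hy hz => ⟨hA x y z m hx.1 hy.1 hz, hB x y z m hx.2 hy.2 hz⟩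

/-- The closure operator on subsets of `S × ℕ` whose closed sets are the `LevelClosed` ones. -/
def levelClosure : ClosureOperator (Set (S × ℕ)) :=
  .ofCompletePred LevelClosed fun _ h x y z m hx hy hz B hB =>
    h B hB x y z m (hx B hB) (hy B hB) hz

theorem levelClosure_subset {U B : Set (S × ℕ)} (hU : U ⊆ B) (hB : LevelClosed B) :
    levelClosure U ⊆ B :=
  ClosureOperator.closure_min hU hB

theorem mem_or_isJoinCover_of_mem_levelClosure {U : Set (S × ℕ)} {p : S} {n : ℕ}
    (h : (p, n) ∈ levelClosure U) : (p, n) ∈ U ∨ IsJoinCover {b | ∃ m > n, (b, m) ∈ U} p := by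
  let B : Set (S × ℕ) := {a | a ∈ U ∨ IsJoinCover {b | ∃ m > a.2, (b, m) ∈ U} a.1}
  have hcover : ∀ x m, (x, m + 1) ∈ B → IsJoinCover {b | ∃ k > m, (b, k) ∈ U} x := by
    rintro x m (hx | hx)
    · exact isJoinCover_of_le ⟨m + 1, m.lt_succ_self, hx⟩ le_rfl
    · exact hx.mono fun b ⟨k, hk, hb⟩ => ⟨k, Nat.lt_of_succ_lt hk, hb⟩
  have hB : LevelClosed B := fun x y z m hx hy hz =>
    .inr fun t ht => hz.trans (sup_le (hcover x m hx ht) (hcover y m hy ht))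
  exact levelClosure_subset (fun a ha => .inl ha) hB h

/-- The level-closed subsets of `S × ℕ` of bounded level, ordered by inclusion: the test
semilattice to which sharp transferability is applied. -/
structure LevelSet (S : Type*) [SemilatticeSup S] where
  carrier : Set (S × ℕ)
  levelClosed : LevelClosed carrier
  bounded : ∃ N, carrier ⊆ {a | a.2 ≤ N}

namespace LevelSet

instance : PartialOrder (LevelSet S) :=
  PartialOrder.lift carrier fun ⟨_, _, _⟩ ⟨_, _, _⟩ h => by congr

instance : SemilatticeSup (LevelSet S) where
  sup A B := ⟨levelClosure (A.carrier ∪ B.carrier), levelClosure.isClosed_closure _, by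
    obtain ⟨⟨N, hN⟩, ⟨M, hM⟩⟩ := And.intro A.bounded B.bounded
    refine ⟨max N M, levelClosure_subset (Set.union_subset ?_ ?_) (levelClosed_setOf_snd_le _)⟩
    · exact fun a ha => (hN ha).trans (le_max_left N M)
    · exact fun a ha => (hM ha).trans (le_max_right N M)⟩
  le_sup_left _ _ := Set.subset_union_left.trans (levelClosure.le_closure _)
  le_sup_right _ _ := Set.subset_union_right.trans (levelClosure.le_closure _)
  sup_le _ _ C hA hB := levelClosure_subset (Set.union_subset hA hB) C.levelClosed

theorem carrier_sup_subset {A B : LevelSet S} {C : Set (S × ℕ)} (hA : A.carrier ⊆ C)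
    (hB : B.carrier ⊆ C) (hC : LevelClosed C) : (A ⊔ B).carrier ⊆ C :=
  levelClosure_subset (Set.union_subset hA hB) hC

theorem carrier_sup'_subset {ι : Type*} {I : Finset ι} (hI : I.Nonempty) (A : ι → LevelSet S) :
    (I.sup' hI A).carrier ⊆ levelClosure (⋃ i ∈ I, (A i).carrier) :=
  Finset.sup'_induction (p := fun B : LevelSet S => B.carrier ⊆ _) hI A
    (fun _ hB _ hB' => carrier_sup_subset hB hB' (levelClosure.isClosed_closure _))
    fun _ hi _ ha => levelClosure.le_closure _ (Set.mem_biUnion hi ha)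

/-- The largest `n` with `(p, n) ∈ A`, and `0` if there is no such `n`. -/
noncomputable def topLevel (A : LevelSet S) (p : S) : ℕ :=
  sSup {n | (p, n) ∈ A.carrier}

theorem bddAbove_levels (A : LevelSet S) (p : S) : BddAbove {n | (p, n) ∈ A.carrier} :=
  let ⟨N, hN⟩ := A.bounded
  ⟨N, fun _ hn => hN hn⟩

theorem le_topLevel {A : LevelSet S} {p : S} {n : ℕ} (h : (p, n) ∈ A.carrier) :
    n ≤ A.topLevel p :=
  le_csSup (A.bddAbove_levels p) h

theorem mk_topLevel_mem {A : LevelSet S} {p : S} (h : ∃ n, (p, n) ∈ A.carrier) :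
    (p, A.topLevel p) ∈ A.carrier :=
  Nat.sSup_mem h (A.bddAbove_levels p)

/-- The set of all pairs with first component at most `x` and level at most `N`. The boxes at `x`
are cofinal in `levelIdeal x`. -/
def box (x : S) (N : ℕ) : LevelSet S where
  carrier := {a | a.1 ≤ x} ∩ {a | a.2 ≤ N}
  levelClosed := (levelClosed_setOf_fst_le x).inter (levelClosed_setOf_snd_le N)
  bounded := ⟨N, Set.inter_subset_right⟩

theorem mk_mem_box {x z : S} {N m : ℕ} : (z, m) ∈ (box x N).carrier ↔ z ≤ x ∧ m ≤ N :=
  Iff.rfl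

end LevelSet

/-- The ideal of all level sets living below `x`. -/
def levelIdeal (x : S) : Set (LevelSet S) :=
  {A | A.carrier ⊆ {a | a.1 ≤ x}}

theorem mem_levelIdeal {A : LevelSet S} {x : S} :
    A ∈ levelIdeal x ↔ ∀ a ∈ A.carrier, a.1 ≤ x :=
  Iff.rfl

theorem box_mem_levelIdeal (x : S) (N : ℕ) : LevelSet.box x N ∈ levelIdeal x :=
  Set.inter_subset_left

theorem isIdealSet_levelIdeal (x : S) : IsIdealSet (LevelSet S) (levelIdeal x) :=
  ⟨⟨_, box_mem_levelIdeal x 0⟩, fun _ _ hAB hB _ ha => hB (hAB ha), fun A hA B hB =>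
    ⟨A ⊔ B, LevelSet.carrier_sup_subset hA hB (levelClosed_setOf_fst_le x),
      le_sup_left, le_sup_right⟩⟩

theorem levelIdeal_injective : Function.Injective (levelIdeal (S := S)) := by
  have hle : ∀ x y : S, levelIdeal x = levelIdeal y → x ≤ y := fun x y h =>
    mem_levelIdeal.1 (h ▸ box_mem_levelIdeal x 0) (x, 0) (LevelSet.mk_mem_box.2 ⟨le_rfl, le_rfl⟩)
  exact fun x y h => le_antisymm (hle x y h) (hle y x h.symm)

theorem isIdealHom_levelIdeal : IsIdealHom (levelIdeal (S := S)) where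
  isIdealSet := isIdealSet_levelIdeal
  isLeast_sup x y := by
    refine ⟨⟨isIdealSet_levelIdeal _, Set.union_subset ?_ ?_⟩, ?_⟩
    · exact fun A hA a ha => (mem_levelIdeal.1 hA a ha).trans le_sup_left
    · exact fun A hA a ha => (mem_levelIdeal.1 hA a ha).trans le_sup_right
    · rintro I ⟨hI, hxy⟩ A hA
      obtain ⟨N, hN⟩ := A.bounded
      -- One level is lost in forming the join of the boxes.
      have hbox : LevelSet.box x (N + 1) ⊔ LevelSet.box y (N + 1) ∈ I :=
        hI.sup_mem_s3 (hxy (.inl (box_mem_levelIdeal x _))) (hxy (.inr (box_mem_levelIdeal y _)))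
      refine hI.2.1 A _ (fun ⟨z, m⟩ ha => ?_) hbox
      have hm : m + 1 ≤ N + 1 := Nat.succ_le_succ (hN ha)
      refine LevelSet.levelClosed _ x y z m ?_ ?_ (hA ha)
      · exact (le_sup_left : LevelSet.box x (N + 1) ≤ _) (LevelSet.mk_mem_box.2 ⟨le_rfl, hm⟩)
      · exact (le_sup_right : LevelSet.box y (N + 1) ≤ _) (LevelSet.mk_mem_box.2 ⟨le_rfl, hm⟩)

section LevelLift

variable [Finite S] {ψ : S → LevelSet S}

theorem SJoinIrr.exists_mem_carrier (hψ : ∀ x y, ψ x ∈ levelIdeal y ↔ x ≤ y) {p : S}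
    (hp : SJoinIrr S p) : ∃ n, (p, n) ∈ (ψ p).carrier := by
  have hcover : IsJoinCover (Prod.fst '' (ψ p).carrier) p := fun t ht =>
    (hψ p t).1 fun a ha => ht (Set.mem_image_of_mem _ ha)
  have hbelow : Prod.fst '' (ψ p).carrier ⊆ Set.Iic p := by
    rintro _ ⟨a, ha, rfl⟩
    exact (hψ p p).2 le_rfl ha
  simpa using hp.mem_of_isJoinCover (Set.toFinite _) hcover hbelow

theorem SMinimalPair.topLevel_lt (hsup : ∀ x y, ψ (x ⊔ y) = ψ x ⊔ ψ y)
    (hψ : ∀ x y, ψ x ∈ levelIdeal y ↔ x ≤ y) {p : S} {I : Finset S} (h : SMinimalPair S p I)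
    {i : S} (hi : i ∈ I) : (ψ p).topLevel p < (ψ i).topLevel i := by
  have hψle : ∀ k, (ψ k).carrier ⊆ {a | a.1 ≤ k} := fun k => (hψ k k).2 le_rfl
  obtain ⟨hne, hpI⟩ := h.2.2.2.2.1
  have hψp : ψ p ≤ I.sup' hne ψ := calc
    ψ p ≤ ψ (I.sup' hne id) := by rw [← sup_eq_right, ← hsup, sup_eq_right.2 hpI]
    _ = I.sup' hne ψ := Finset.apply_sup'_eq_sup'_comp hne ψ hsup
  have hmem : (p, (ψ p).topLevel p) ∈ levelClosure (⋃ k ∈ I, (ψ k).carrier) :=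
    LevelSet.carrier_sup'_subset hne ψ
      (hψp (LevelSet.mk_topLevel_mem (h.1.exists_mem_carrier hψ)))
  rcases mem_or_isJoinCover_of_mem_levelClosure hmem with hpU | hcover
  · obtain ⟨k, hk, hpk⟩ := Set.mem_iUnion₂.1 hpU
    exact absurd (hψle k hpk) (h.not_le hk)
  have hcofinal : IsCofinalFor
      {b | ∃ m > (ψ p).topLevel p, (b, m) ∈ ⋃ k ∈ I, (ψ k).carrier} (I : Set S) := by
    rintro b ⟨m, -, hb⟩
    obtain ⟨k, hk, hbk⟩ := Set.mem_iUnion₂.1 hb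
    exact ⟨k, hk, hψle k hbk⟩
  obtain ⟨m, hm, him⟩ := h.subset_of_isCofinalFor hcofinal hcover hi
  obtain ⟨k, hk, hik⟩ := Set.mem_iUnion₂.1 him
  obtain rfl : i = k := h.isAntichain.eq hi hk (hψle k hik)
  exact hm.trans_le (LevelSet.le_topLevel hik)

theorem wellFounded_joinDependency_of_levelSet_lift (hsup : ∀ x y, ψ (x ⊔ y) = ψ x ⊔ ψ y)
    (hψ : ∀ x y, ψ x ∈ levelIdeal y ↔ x ≤ y) : WellFounded (JoinDependency S) :=
  Subrelation.wf (fun ⟨_, h, hi⟩ => h.topLevel_lt hsup hψ hi)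
    (measure fun p => (ψ p).topLevel p).wf

end LevelLift

end LevelSet

/-- A finite join-semilattice `S` is sharply transferable (for every join-semilattice
`L` and every join-embedding `φ : S → Id L`, there is a join-embedding `ψ : S → L`
with `ψ x ∈ φ y ↔ x ≤ y`) if and only if `S` satisfies condition (T). -/
theorem sharplyTransferable_semilattice_iff_condT (S : Type u) [SemilatticeSup S] [Fintype S] :
    (∀ (L : Type u) [SemilatticeSup L] (φ : S → Set L),
        (∀ x, IsIdealSet L (φ x)) →
        Function.Injective φ →
        (∀ x y : S, IsLeast {I : Set L | IsIdealSet L I ∧ φ x ∪ φ y ⊆ I} (φ (x ⊔ y))) →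
        ∃ ψ : S → L, Function.Injective ψ ∧ (∀ x y, ψ (x ⊔ y) = ψ x ⊔ ψ y) ∧
          ∀ x y : S, ψ x ∈ φ y ↔ x ≤ y) ↔
    CondT S := by
  constructor
  · intro h
    obtain ⟨ψ, -, hsup, hψ⟩ := h (LevelSet S) levelIdeal isIdealHom_levelIdeal.isIdealSet
      levelIdeal_injective isIdealHom_levelIdeal.isLeast_sup
    exact condT_of_wellFounded_joinDependency
      (wellFounded_joinDependency_of_levelSet_lift hsup hψ)
  · intro hT L _ φ hideal hinj hsup
    exact IsIdealHom.exists_sharp_lift ⟨hideal, hsup⟩ hinj hT.wellFounded_joinDependency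
end

section
/- A finite lattice A is sharply transferable if and only if A satisfies the three conditions (T∨), (T∧), and Whitman's condition (W). -/
/-!
Sufficiency. A map from the join-irreducible elements of `A` to `L` extends to a join-homomorphism
as soon as it turns minimal pairs into join covers. Let `φ : A → Id L` be an embedding. By (T∨) such
a map can be chosen by recursion along the order of condition (T), taking at `i` an element of the
ideal `φ i` that lies above the witnesses required by all minimal pairs `(p, I)` with `i ∈ I`. This
gives a join-homomorphism `e` with `e x ∈ φ y ↔ x ≤ y`. Let `R` be the sublattice of `A × L`
generated by the graph of `e`. The dual of the same recursion, inside `R`, gives a meet-homomorphism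
`ξ ≥ e` with graph in `R`. Since `e` preserves joins and `ξ` preserves meets, every `(a, l) ∈ R`
satisfies `e a ≤ l ≤ ξ a`. The induction by which Whitman solved the word problem for free lattices
then shows that `ξ` also preserves joins.

Necessity. Let `π : L → A` be a surjective lattice homomorphism such that `π z ≤ a ∨ b` implies
`z ≤ x ∨ y` for some `x`, `y` with `π x ≤ a`, `π y ≤ b`. Then `a ↦ {z | π z ≤ a}` embeds `A` into
`Id L`, so sharp transferability provides a section `ξ` of `π`.

* For (T∨), `L` is built so that forming a join costs one level: if `(p, I)` is a minimal pair and
  `p` occurs in `ξ p` at level `n`, then each `i ∈ I` occurs in `ξ i` at level `n + 1`. Ordering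
  each join-irreducible `p` by the highest level at which it occurs in `ξ p` gives (T∨). The dual of
  the same construction over the dual of `A` gives (T∧).
* For (W), (T∨) makes `A` join-semidistributive, so that a failure `x ∧ y ≤ u ∨ v` can be chosen
  with `u ∨ v ≤ x`. In `L` every element of `A` is repeated on infinitely many levels, twice as
  densely on the interval `[x ∧ y, u ∨ v]` as elsewhere. Then `ξ (x ∧ y)` is on an odd level and
  `ξ (u ∨ v)` on an even one; but `x ∧ y ≤ u ∨ v ≤ x` forces them onto the same level.
-/

universe u

/-- Whitman's condition (W). -/
def WhitmanW (A : Type*) [Lattice A] : Prop :=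
  ∀ x y u v : A, x ⊓ y ≤ u ⊔ v →
    x ⊓ y ≤ u ∨ x ⊓ y ≤ v ∨ x ≤ u ⊔ v ∨ y ≤ u ⊔ v

/-! ### Condition (T) -/

theorem condT_iff_exists_isStrictOrder {S : Type*} [SemilatticeSup S] :
    CondT S ↔ ∃ r : S → S → Prop, IsStrictOrder S r ∧
      ∀ p I, SMinimalPair S p I → ∀ j ∈ I, r p j := by
  constructor
  · rintro ⟨r, -, hanti, htrans, -, hT⟩
    refine ⟨fun p q => SJoinIrr S p ∧ SJoinIrr S q ∧ r p q ∧ p ≠ q,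
      { irrefl := fun p h => h.2.2.2 rfl, trans := ?_ }, fun p I h j hj =>
        ⟨h.1, h.2.1 j hj, hT p I h j hj, fun hpj => h.2.2.2.1 (hpj ▸ hj)⟩⟩
    rintro p q s ⟨hp, hq, hpq, hne⟩ ⟨-, hs, hqs, -⟩
    refine ⟨hp, hs, htrans p q s hp hq hs hpq hqs, ?_⟩
    rintro rfl
    exact hne (hanti p q hp hq hpq hqs)
  · rintro ⟨r, _, hT⟩
    obtain ⟨s, _, hs⟩ := @extend_partialOrder S (partialOrderOfSO r).le
      (@instIsPartialOrderLe S (partialOrderOfSO r))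
    exact ⟨s, fun p _ => refl_of s p, fun p q _ _ => antisymm_of s,
      fun p q t _ _ _ => trans_of s, fun p q _ _ => total_of s p q,
      fun p I h j hj => hs _ _ (Or.inr (hT p I h j hj))⟩

theorem condT_of_isEmpty {S : Type*} [SemilatticeSup S] [IsEmpty S] : CondT S :=
  condT_iff_exists_isStrictOrder.2 ⟨emptyRelation, { trans := nofun }, fun p => isEmptyElim p⟩

namespace SMinimalPair

variable {S : Type*} [SemilatticeSup S] {p : S} {I : Finset S}

theorem not_le_s4 (h : SMinimalPair S p I) {i : S} (hi : i ∈ I) : ¬ p ≤ i := by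
  intro hpi
  obtain ⟨hp, -, hcard, -, -, hmin⟩ := h
  have hI : I ⊆ {p} := hmin {p} (Finset.singleton_nonempty p) (by simpa using hp)
    (by simpa using ⟨i, hi, hpi⟩) (by simp)
  have := Finset.card_le_card hI
  rw [Finset.card_singleton] at this
  omega

theorem isAntichain_s4 (h : SMinimalPair S p I) : IsAntichain (· ≤ ·) (I : Set S) := by
  classical
  intro i hi k hk hne hik
  obtain ⟨-, hirr, -, -, ⟨hI, hp⟩, hmin⟩ := h
  have hk' : k ∈ I.erase i := Finset.mem_erase.2 ⟨hne.symm, hk⟩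
  have hle : I.sup' hI id ≤ (I.erase i).sup' ⟨k, hk'⟩ id := by
    refine Finset.sup'_le _ _ fun x hx => ?_
    by_cases hxi : x = i
    · exact hxi ▸ hik.trans (Finset.le_sup' id hk')
    · exact Finset.le_sup' id (Finset.mem_erase.2 ⟨hxi, hx⟩)
  have hsub : I ⊆ I.erase i := hmin _ _ (fun q hq => hirr q (Finset.mem_of_mem_erase hq))
    (fun x hx => ⟨x, Finset.mem_of_mem_erase hx, le_rfl⟩) (hp.trans hle)
  exact Finset.notMem_erase i I (hsub hi)

end SMinimalPair

/-- `JoinCovers D p` expresses `p ≤ ⋁ D`, without requiring the join to exist. -/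
def JoinCovers {S : Type*} [Preorder S] (D : LowerSet S) (p : S) : Prop :=
  ∀ u ∈ upperBounds (D : Set S), p ≤ u

section MinimalCovers

variable {S : Type*} [SemilatticeSup S] {D : LowerSet S} {p : S}

theorem sJoinIrr_of_maximal_mem (hD : Minimal (JoinCovers · p) D) {i : S}
    (hi : Maximal (· ∈ D) i) : SJoinIrr S i := by
  have hlt : D.erase i < D := LowerSet.erase_lt.2 hi.prop
  obtain ⟨u, hu, hpu⟩ : ∃ u ∈ upperBounds (D.erase i : Set S), ¬ p ≤ u := by
    simpa [JoinCovers] using hD.not_prop_of_lt hlt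
  have hle : ∀ x ∈ D, x ≠ i → x ≤ u := fun x hx hne =>
    hu ⟨hx, fun hix => hne (hi.eq_of_ge hx hix)⟩
  have hiu : ¬ i ≤ u := fun hiu => hpu <| hD.prop u fun x hx => by
    by_cases hxi : x = i
    · exact hxi ▸ hiu
    · exact hle x hx hxi
  refine ⟨fun hbot => hiu (hbot u), fun b c hbc => ?_⟩
  by_contra! h
  subst hbc
  exact hiu (sup_le (hle b (D.lower le_sup_left hi.prop) h.1)
    (hle c (D.lower le_sup_right hi.prop) h.2))

variable [Finite S]

theorem exists_sMinimalPair_of_minimal_joinCovers (hp : SJoinIrr S p)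
    (hD : Minimal (JoinCovers · p) D) (hpD : p ∉ D) :
    ∃ I, SMinimalPair S p I ∧ ∀ i ∈ I, i ∈ D := by
  let I : Finset S := (Set.toFinite {i | Maximal (· ∈ D) i}).toFinset
  have mem_I {i : S} : i ∈ I ↔ Maximal (· ∈ D) i := by simp [I]
  have hDI : ∀ x ∈ D, ∃ i ∈ I, x ≤ i := fun x hx =>
    have ⟨i, hxi, hi⟩ := (Set.toFinite (D : Set S)).exists_le_maximal hx
    ⟨i, mem_I.2 hi, hxi⟩
  have hI : I.Nonempty := by
    by_contra hI
    refine hp.1 fun u => hD.prop u fun x hx => ?_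
    obtain ⟨i, hi, -⟩ := hDI x hx
    exact absurd ⟨i, hi⟩ hI
  have hpI : p ≤ I.sup' hI id := hD.prop _ fun x hx =>
    have ⟨i, hi, hxi⟩ := hDI x hx
    hxi.trans (Finset.le_sup' id hi)
  have hcard : 2 ≤ I.card := by
    by_contra! hlt
    obtain ⟨i, hIi⟩ := Finset.card_eq_one.1 (le_antisymm (Nat.lt_succ_iff.1 hlt) hI.card_pos)
    refine hpD (D.lower (?_ : p ≤ i) (mem_I.1 (hIi ▸ Finset.mem_singleton_self i)).prop)
    simpa [hIi] using hpI
  refine ⟨I, ⟨hp, fun i hi => sJoinIrr_of_maximal_mem hD (mem_I.1 hi), hcard,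
    fun h => hpD (mem_I.1 h).prop, ⟨hI, hpI⟩, fun J hJ _ hJI hpJ i hi => ?_⟩,
    fun i hi => (mem_I.1 hi).prop⟩
  have hJD : lowerClosure (J : Set S) ≤ D := lowerClosure_min (fun x hx =>
    have ⟨k, hk, hxk⟩ := hJI x hx
    D.lower hxk (mem_I.1 hk).prop) D.lower
  have hcov : JoinCovers (lowerClosure (J : Set S)) p := fun u hu =>
    hpJ.trans (Finset.sup'_le hJ id fun x hx => hu (subset_lowerClosure hx))
  obtain ⟨j, hj, hij⟩ := hD.le_of_le hcov hJD (mem_I.1 hi).prop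
  exact (mem_I.1 hi).eq_of_le (hJD (subset_lowerClosure hj)) hij ▸ hj

theorem exists_sMinimalPair_subset (hp : SJoinIrr S p) (hD : JoinCovers D p) (hpD : p ∉ D) :
    ∃ I, SMinimalPair S p I ∧ ∀ i ∈ I, i ∈ D := by
  obtain ⟨D', hD'D, hD'⟩ := exists_minimal_le_of_wellFoundedLT (JoinCovers · p) D hD
  obtain ⟨I, hI, hID⟩ :=
    exists_sMinimalPair_of_minimal_joinCovers hp hD' fun h => hpD (hD'D h)
  exact ⟨I, hI, fun i hi => hD'D (hID i hi)⟩

theorem exists_sMinimalPair_of_le_sup {a b : S} (hp : SJoinIrr S p) (hab : p ≤ a ⊔ b)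
    (ha : ¬ p ≤ a) (hb : ¬ p ≤ b) : ∃ I, SMinimalPair S p I ∧ ∀ i ∈ I, i ≤ a ∨ i ≤ b :=
  exists_sMinimalPair_subset (D := LowerSet.Iic a ⊔ LowerSet.Iic b) hp
    (fun _ hu => hab.trans (sup_le (hu (Or.inl le_rfl)) (hu (Or.inr le_rfl)))) (not_or.2 ⟨ha, hb⟩)

theorem SMinimalPair.subset_lowerSet {I : Finset S} (h : SMinimalPair S p I)
    (hDI : ∀ x ∈ D, ∃ i ∈ I, x ≤ i) (hD : JoinCovers D p) : (I : Set S) ⊆ D := by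
  have hpD : p ∉ D := fun hpD =>
    have ⟨_, hi, hpi⟩ := hDI p hpD
    h.not_le_s4 hi hpi
  obtain ⟨J, hJ, hJD⟩ := exists_sMinimalPair_subset h.1 hD hpD
  obtain ⟨-, hirr, -, -, ⟨hne, hpJ⟩, -⟩ := hJ
  exact fun i hi => hJD i (h.2.2.2.2.2 J hne hirr (fun x hx => hDI x (hJD x hx)) hpJ hi)

theorem le_of_forall_sJoinIrr_le [OrderBot S] {a b : S}
    (h : ∀ p, SJoinIrr S p → p ≤ a → p ≤ b) : a ≤ b := by
  obtain ⟨s, rfl, hirr⟩ := exists_supIrred_decomposition a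
  exact Finset.sup_le fun p hp => h p ⟨fun hbot => (hirr hp).1 hbot.isMin, (hirr hp).2⟩
    (Finset.le_sup (f := id) hp)

end MinimalCovers

theorem CondT.inf_sup_eq_of_sup_eq {A : Type*} [Lattice A] [Finite A] [OrderBot A]
    (h : CondT A) {x y b : A} (hxy : x ⊔ b = y ⊔ b) : x ⊓ y ⊔ b = x ⊔ b := by
  obtain ⟨r, _, hr⟩ := condT_iff_exists_isStrictOrder.1 h
  refine le_antisymm (sup_le_sup_right inf_le_left b) (le_of_forall_sJoinIrr_le ?_)
  by_contra! hex
  obtain ⟨p, ⟨hp, hpxb, hpc⟩, hmax⟩ :=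
    (Finite.wellFounded_of_trans_of_irrefl (Function.swap r)).has_min
      {p | SJoinIrr A p ∧ p ≤ x ⊔ b ∧ ¬ p ≤ x ⊓ y ⊔ b} hex
  have hple : ∀ z, z ⊔ b = x ⊔ b → p ≤ z := by
    intro z hz
    by_contra hpz
    obtain ⟨I, hI, hIzb⟩ := exists_sMinimalPair_of_le_sup hp (hz ▸ hpxb) hpz
      fun hpb => hpc (hpb.trans le_sup_right)
    obtain ⟨hne, hpI⟩ := hI.2.2.2.2.1
    refine hpc (hpI.trans (Finset.sup'_le hne id fun i hi => ?_))
    by_contra hic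
    have hixb : i ≤ x ⊔ b := hz ▸ (hIzb i hi).elim le_sup_of_le_left le_sup_of_le_right
    exact hmax i ⟨hI.2.1 i hi, hixb, hic⟩ (hr p I hI i hi)
  exact hpc (le_sup_of_le_left (le_inf (hple x rfl) (hple y hxy.symm)))

/-! ### Extending maps from join-irreducibles -/

/-- `E` turns every minimal pair `(p, I)` into a join cover `E p ≤ ⋁ E I`. Only the values of `E`
at join-irreducible elements are constrained. -/
def RespectsMinimalPairs {A L : Type*} [SemilatticeSup A] [Preorder L] (E : A → L) : Prop :=
  ∀ p I, SMinimalPair A p I → ∀ c, (∀ i ∈ I, E i ≤ c) → E p ≤ c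

section SupExtend

variable {A L : Type*} [SemilatticeSup A] [OrderBot A] [Finite A] [SemilatticeSup L]

/-- The least element and the join-irreducible elements below `a`. -/
noncomputable def irrBelow (a : A) : Finset A :=
  (Set.toFinite {p | (p = ⊥ ∨ SJoinIrr A p) ∧ p ≤ a}).toFinset

theorem mem_irrBelow {a p : A} : p ∈ irrBelow a ↔ (p = ⊥ ∨ SJoinIrr A p) ∧ p ≤ a := by
  simp [irrBelow]

theorem irrBelow_nonempty (a : A) : (irrBelow a).Nonempty :=
  ⟨⊥, mem_irrBelow.2 ⟨Or.inl rfl, bot_le⟩⟩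

theorem irrBelow_mono {a b : A} (hab : a ≤ b) : irrBelow a ⊆ irrBelow b := fun _ hp =>
  mem_irrBelow.2 ⟨(mem_irrBelow.1 hp).1, (mem_irrBelow.1 hp).2.trans hab⟩

theorem sup'_irrBelow (a : A) : (irrBelow a).sup' (irrBelow_nonempty a) id = a :=
  le_antisymm (Finset.sup'_le _ _ fun _ hp => (mem_irrBelow.1 hp).2) <|
    le_of_forall_sJoinIrr_le fun _ hp hpa =>
      Finset.le_sup' id (mem_irrBelow.2 ⟨Or.inr hp, hpa⟩)

/-- The join-homomorphism which sends `a` to the join of the values of `E` at `⊥` and at the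
join-irreducible elements below `a`. -/
noncomputable def supExtend (E : A → L) (hE : RespectsMinimalPairs E) : SupHom A L where
  toFun a := (irrBelow a).sup' (irrBelow_nonempty a) E
  map_sup' a b := by
    refine le_antisymm (Finset.sup'_le _ _ fun p hp => ?_) (sup_le
      (Finset.sup'_mono E (irrBelow_mono le_sup_left) _)
      (Finset.sup'_mono E (irrBelow_mono le_sup_right) _))
    have hle : ∀ i, (i = ⊥ ∨ SJoinIrr A i) → i ≤ a ∨ i ≤ b →
        E i ≤ (irrBelow a).sup' (irrBelow_nonempty a) E ⊔
          (irrBelow b).sup' (irrBelow_nonempty b) E := fun i hi hiab =>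
      hiab.elim
        (fun h => le_sup_of_le_left (Finset.le_sup' E (mem_irrBelow.2 ⟨hi, h⟩)))
        (fun h => le_sup_of_le_right (Finset.le_sup' E (mem_irrBelow.2 ⟨hi, h⟩)))
    obtain ⟨hirr, hpab⟩ := mem_irrBelow.1 hp
    by_cases hpa : p ≤ a
    · exact hle p hirr (Or.inl hpa)
    by_cases hpb : p ≤ b
    · exact hle p hirr (Or.inr hpb)
    have hp : SJoinIrr A p := hirr.resolve_left fun h => hpa (h ▸ bot_le)
    obtain ⟨I, hI, hIab⟩ := exists_sMinimalPair_of_le_sup hp hpab hpa hpb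
    exact hE p I hI _ fun i hi => hle i (Or.inr (hI.2.1 i hi)) (hIab i hi)

theorem supExtend_mem {E : A → L} (hE : RespectsMinimalPairs E) {T : Set (A × L)}
    (hT : SupClosed T) (h : ∀ p, (p, E p) ∈ T) (a : A) : (a, supExtend E hE a) ∈ T := by
  have hsup : (irrBelow a).sup' (irrBelow_nonempty a) (fun p => (p, E p)) =
      (a, supExtend E hE a) :=
    Prod.ext
      ((Finset.apply_sup'_eq_sup'_comp _ Prod.fst fun _ _ => rfl).trans (sup'_irrBelow a))
      (Finset.apply_sup'_eq_sup'_comp _ Prod.snd fun _ _ => rfl)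
  exact hsup ▸ hT.finsetSup'_mem (irrBelow_nonempty a) fun p _ => h p

end SupExtend

/-! ### Choosing elements of ideals along a well-founded relation -/

theorem exists_forall_of_wellFounded {ι : Type*} {β : ι → Type*} {r : ι → ι → Prop}
    (hr : WellFounded r) {P : ∀ i, (∀ j, r j i → β j) → β i → Prop}
    (h : ∀ i f, ∃ b, P i f b) : ∃ F : ∀ i, β i, ∀ i, P i (fun j _ => F j) (F i) := by
  choose G hG using h
  refine ⟨hr.fix G, fun i => ?_⟩
  rw [hr.fix_eq]
  exact hG i _

theorem exists_mem_forall_of_directedOn {α ι : Type*} {r : α → α → Prop} [IsTrans α r] {s : Set α}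
    (hs : DirectedOn r s) (hne : s.Nonempty) [Finite ι] (v : ι → s) :
    ∃ u ∈ s, ∀ i, r (v i) u := by
  have := hne.to_subtype
  obtain ⟨u, hu⟩ := (directedOn_iff_directed.1 hs).finite_le v
  exact ⟨u, u.2, hu⟩

theorem exists_forall_le_of_mem_sup' {L ι : Type*} [Lattice L] (F : ι → Order.Ideal L)
    {I : Finset ι} (hI : I.Nonempty) {l : L} (hl : l ∈ I.sup' hI F) :
    ∃ w : ∀ i, F i, ∀ c, (∀ i ∈ I, (w i : L) ≤ c) → l ≤ c := by
  classical
  let K : Order.Ideal L :=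
    { carrier := {l | ∃ w : ∀ i, F i, ∀ c, (∀ i ∈ I, (w i : L) ≤ c) → l ≤ c}
      lower' := fun x y hyx ⟨w, hw⟩ => ⟨w, fun c hc => hyx.trans (hw c hc)⟩
      nonempty' := by
        obtain ⟨i, hi⟩ := hI
        exact ⟨_, fun i => ⟨_, (F i).nonempty.some_mem⟩, fun c hc => hc i hi⟩
      directed' := by
        rintro x ⟨v, hv⟩ y ⟨w, hw⟩
        exact ⟨x ⊔ y, ⟨fun i => ⟨v i ⊔ w i, Order.Ideal.sup_mem (v i).2 (w i).2⟩, fun c hc =>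
          sup_le (hv c fun i hi => le_sup_left.trans (hc i hi))
            (hw c fun i hi => le_sup_right.trans (hc i hi))⟩, le_sup_left, le_sup_right⟩ }
  have hK : I.sup' hI F ≤ K := Finset.sup'_le hI F fun i hi x hx =>
    ⟨Function.update (fun j => ⟨_, (F j).nonempty.some_mem⟩) i ⟨x, hx⟩, fun c hc => by
      simpa using hc i hi⟩
  exact hK hl

theorem SMinimalPair.exists_forall_le_of_mem_ideal {A L : Type*} [SemilatticeSup A] [Lattice L]
    {p : A} {I : Finset A} (h : SMinimalPair A p I) (φ : SupHom A (Order.Ideal L)) {l : L}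
    (hl : l ∈ φ p) : ∃ w : ∀ i, φ i, ∀ c, (∀ i ∈ I, (w i : L) ≤ c) → l ≤ c := by
  obtain ⟨hI, hpI⟩ := h.2.2.2.2.1
  have hφ : φ p ≤ I.sup' hI φ := calc
    φ p ≤ φ (I.sup' hI id) := OrderHomClass.mono φ hpI
    _ = I.sup' hI φ := map_finset_sup' φ hI id
  exact exists_forall_le_of_mem_sup' φ hI (hφ hl)

theorem exists_supHom_mem_ideal_iff {A L : Type*} [SemilatticeSup A] [OrderBot A] [Finite A]
    [Lattice L] (hA : CondT A) (φ : SupHom A (Order.Ideal L)) (hφ : ∀ a b, φ a ≤ φ b → a ≤ b) :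
    ∃ e : SupHom A L, ∀ a b, e a ∈ φ b ↔ a ≤ b := by
  obtain ⟨r, _, hr⟩ := condT_iff_exists_isStrictOrder.1 hA
  have hsep (a b : A) (hab : ¬ a ≤ b) : ∃ l : φ a, (l : L) ∉ φ b := by
    simpa [SetLike.not_le_iff_exists] using mt (hφ a b) hab
  choose s hs using hsep
  choose w hw using fun p I (h : SMinimalPair A p I) (l : φ p) =>
    h.exists_forall_le_of_mem_ideal φ l.2
  -- `w` bounds a choice at `p` by elements of the `φ i`, `i ∈ I`; choices at `i` must exceed these.
  obtain ⟨E, hE⟩ := exists_forall_of_wellFounded (β := fun i => φ i)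
    (Finite.wellFounded_of_trans_of_irrefl r)
    (P := fun i f b => (∀ a (h : ¬ i ≤ a), s i a h ≤ b) ∧
      ∀ p I (h : SMinimalPair A p I) (hi : i ∈ I), w p I h (f p (hr p I h i hi)) i ≤ b) <| by
    intro i f
    obtain ⟨u, hu, hle⟩ := exists_mem_forall_of_directedOn (φ i).directed (φ i).nonempty
      (Sum.elim (fun a : {a // ¬ i ≤ a} => s i a a.2)
        fun q : {q : A × Finset A // SMinimalPair A q.1 q.2 ∧ i ∈ q.2} =>
          w q.1.1 q.1.2 q.2.1 (f q.1.1 (hr _ _ q.2.1 i q.2.2)) i)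
    exact ⟨⟨u, hu⟩, fun a h => hle (Sum.inl ⟨a, h⟩),
      fun p I h hi => hle (Sum.inr ⟨(p, I), h, hi⟩)⟩
  have hEmin : RespectsMinimalPairs fun a => (E a : L) := fun p I h c hc =>
    hw p I h (E p) c fun i hi => le_trans ((hE i).2 p I h hi) (hc i hi)
  have hmem : ∀ a, supExtend _ hEmin a ∈ φ a := supExtend_mem hEmin (T := {x | x.2 ∈ φ x.1})
    (fun x hx y hy => Order.Ideal.sup_mem (OrderHomClass.mono φ le_sup_left hx)
      (OrderHomClass.mono φ le_sup_right hy)) fun p => (E p).2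
  have hsharp : ∀ a b, supExtend _ hEmin a ∈ φ b → a ≤ b := supExtend_mem hEmin
    (T := {x | ∀ b, x.2 ∈ φ b → x.1 ≤ b})
    (fun x hx y hy b h => sup_le (hx b (Order.Ideal.sup_mem_iff.1 h).1)
      (hy b (Order.Ideal.sup_mem_iff.1 h).2))
    fun p b hp => by_contra fun hpb => hs p b hpb ((φ b).lower ((hE p).1 b hpb) hp)
  exact ⟨_, fun a b => ⟨hsharp a b, fun hab => OrderHomClass.mono φ hab (hmem a)⟩⟩

/-! ### Sublattices of `A × L` -/

section Relations

variable {A L : Type*} [Lattice A] [Lattice L]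

theorem SMinimalPair.exists_mem_forall_le_of_isSublattice {p : A} {I : Finset A}
    (h : SMinimalPair A p I) {R : Set (A × L)} (hR : IsSublattice R) {l : L} (hl : (p, l) ∈ R)
    (f : ∀ i ∈ I, L) (hf : ∀ i hi, (i, f i hi) ∈ R) :
    ∃ m ≤ l, (p, m) ∈ R ∧ ∀ c, (∀ i hi, f i hi ≤ c) → m ≤ c := by
  obtain ⟨hI, hpI⟩ := h.2.2.2.2.1
  let g (i : I) : A × L := (i, f i i.2)
  let x : A × L := I.attach.sup' hI.attach g
  have hgx (i : I) : g i ≤ x := Finset.le_sup' g (Finset.mem_attach I i)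
  have hxR : x ∈ R := hR.supClosed.finsetSup'_mem _ fun i _ => hf i i.2
  have hpx : p ≤ x.1 := hpI.trans (Finset.sup'_le hI id fun i hi => (hgx ⟨i, hi⟩).1)
  refine ⟨l ⊓ x.2, inf_le_left, ?_, fun c hc => inf_le_right.trans ?_⟩
  · have hinf : (p, l) ⊓ x = (p, l ⊓ x.2) := Prod.ext (inf_eq_left.2 hpx) rfl
    exact hinf ▸ hR.infClosed hl hxR
  · have hxc : x ≤ (x.1, c) := Finset.sup'_le _ g fun i _ => ⟨(hgx i).1, hc i i.2⟩
    exact hxc.2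

theorem exists_supHom_le_of_isSublattice [OrderBot A] [Finite A] (hA : CondT A)
    {R : Set (A × L)} (hR : IsSublattice R) {e : A → L} (he : Monotone e)
    (heR : ∀ a, (a, e a) ∈ R) :
    ∃ β : SupHom A L, ∀ a, (a, β a) ∈ R ∧ β a ≤ e a := by
  obtain ⟨r, _, hr⟩ := condT_iff_exists_isStrictOrder.1 hA
  obtain ⟨E, hE⟩ := exists_forall_of_wellFounded (β := fun p => {l | (p, l) ∈ R ∧ l ≤ e p})
    (Finite.wellFounded_of_trans_of_irrefl (Function.swap r))
    (P := fun p f b => ∀ I (h : SMinimalPair A p I) (c : L),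
      (∀ i (hi : i ∈ I), (f i (hr p I h i hi) : L) ≤ c) → (b : L) ≤ c) <| by
    intro p f
    have hfiber : InfClosed {l | (p, l) ∈ R ∧ l ≤ e p} := fun l hl m hm =>
      ⟨by simpa using hR.infClosed hl.1 hm.1, inf_le_of_left_le hl.2⟩
    choose l hle hlR hl using fun I : {I // SMinimalPair A p I} =>
      I.2.exists_mem_forall_le_of_isSublattice hR (heR p)
        (fun i hi => f i (hr p I.1 I.2 i hi)) fun i hi => (f i (hr p I.1 I.2 i hi)).2.1
    obtain ⟨u, hu, hul⟩ := exists_mem_forall_of_directedOn hfiber.codirectedOn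
      ⟨e p, heR p, le_rfl⟩ fun I => ⟨l I, hlR I, hle I⟩
    exact ⟨⟨u, hu⟩, fun I h c hc => (hul ⟨I, h⟩).trans (hl ⟨I, h⟩ c hc)⟩
  have hEmin : RespectsMinimalPairs fun p => (E p : L) := fun p I h c => hE p I h c
  exact ⟨supExtend _ hEmin, fun a => ⟨supExtend_mem hEmin hR.supClosed (fun p => (E p).2.1) a,
    supExtend_mem hEmin (T := {x | x.2 ≤ e x.1})
      (fun x hx y hy => sup_le (hx.trans (he le_sup_left)) (hy.trans (he le_sup_right)))
      (fun p => (E p).2.2) a⟩⟩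

theorem exists_infHom_ge_of_isSublattice [OrderTop A] [Finite A] (hA : CondT Aᵒᵈ)
    {R : Set (A × L)} (hR : IsSublattice R) {e : A → L} (he : Monotone e)
    (heR : ∀ a, (a, e a) ∈ R) :
    ∃ γ : InfHom A L, ∀ a, (a, γ a) ∈ R ∧ e a ≤ γ a := by
  obtain ⟨β, hβ⟩ := exists_supHom_le_of_isSublattice hA
    (R := {x : Aᵒᵈ × Lᵒᵈ | (OrderDual.ofDual x.1, OrderDual.ofDual x.2) ∈ R})
    ⟨fun _ hx _ hy => hR.infClosed hx hy, fun _ hx _ hy => hR.supClosed hx hy⟩ he.dual heR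
  exact ⟨InfHom.dual.symm β, hβ⟩

theorem isSublattice_supHom_le (e : SupHom A L) : IsSublattice {x : A × L | e x.1 ≤ x.2} where
  supClosed _ hx _ hy := (map_sup e _ _).trans_le (sup_le_sup hx hy)
  infClosed _ hx _ hy := le_inf ((OrderHomClass.mono e inf_le_left).trans hx)
    ((OrderHomClass.mono e inf_le_right).trans hy)

theorem isSublattice_le_infHom (γ : InfHom A L) : IsSublattice {x : A × L | x.2 ≤ γ x.1} where
  supClosed _ hx _ hy := sup_le (hx.trans (OrderHomClass.mono γ le_sup_left))
    (hy.trans (OrderHomClass.mono γ le_sup_right))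
  infClosed _ hx _ hy := (inf_le_inf hx hy).trans (map_inf γ _ _).ge

theorem WhitmanW.snd_le_snd_of_mem_latticeClosure (hA : WhitmanW A) {X Y : Set (A × L)}
    (hX : ∀ x ∈ X, ∀ y ∈ latticeClosure Y, x.1 ≤ y.1 → x.2 ≤ y.2)
    (hY : ∀ x ∈ latticeClosure X, ∀ y ∈ Y, x.1 ≤ y.1 → x.2 ≤ y.2) {x y : A × L}
    (hx : x ∈ latticeClosure X) (hy : y ∈ latticeClosure Y) (hxy : x.1 ≤ y.1) : x.2 ≤ y.2 := by
  induction hx using latticeClosure_sup_inf_induction generalizing y with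
  | mem x hx => exact hX x hx y hy hxy
  | sup x _ x' _ ih ih' =>
    exact sup_le (ih hy (le_sup_left.trans hxy)) (ih' hy (le_sup_right.trans hxy))
  | inf x hx x' hx' ihx ihx' =>
    induction hy using latticeClosure_sup_inf_induction with
    | mem y hy => exact hY _ (isSublattice_latticeClosure.infClosed hx hx') y hy hxy
    | sup y hy y' hy' ihy ihy' =>
      have hyy' := isSublattice_latticeClosure.supClosed hy hy'
      rcases hA _ _ _ _ hxy with h | h | h | h
      · exact le_sup_of_le_left (ihy h)
      · exact le_sup_of_le_right (ihy' h)
      · exact inf_le_of_left_le (ihx hyy' h)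
      · exact inf_le_of_right_le (ihx' hyy' h)
    | inf y _ y' _ ihy ihy' =>
      exact le_inf (ihy (hxy.trans inf_le_left)) (ihy' (hxy.trans inf_le_right))

theorem WhitmanW.exists_latticeHom_ge [OrderTop A] [Finite A] (hW : WhitmanW A)
    (hA : CondT Aᵒᵈ) (e : SupHom A L) :
    ∃ ξ : LatticeHom A L, ∀ a, (a, ξ a) ∈ latticeClosure (Set.range fun b => (b, e b)) ∧
      e a ≤ ξ a := by
  obtain ⟨γ, hγ⟩ := exists_infHom_ge_of_isSublattice hA (L := L)
    (isSublattice_latticeClosure (s := Set.range fun b => (b, e b))) (OrderHomClass.mono e)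
    fun a => subset_latticeClosure ⟨a, rfl⟩
  have hlower : latticeClosure (Set.range fun b => (b, γ b)) ⊆ {x | e x.1 ≤ x.2} :=
    latticeClosure_min (Set.range_subset_iff.2 fun b => (hγ b).2) (isSublattice_supHom_le e)
  have hupper : latticeClosure (Set.range fun b => (b, e b)) ⊆ {x | x.2 ≤ γ x.1} :=
    latticeClosure_min (Set.range_subset_iff.2 fun b => (hγ b).2) (isSublattice_le_infHom γ)
  have hsup (a b : A) : γ (a ⊔ b) ≤ γ a ⊔ γ b :=
    hW.snd_le_snd_of_mem_latticeClosure (y := (a, γ a) ⊔ (b, γ b))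
      (by
        rintro _ ⟨a, rfl⟩ y hy hay
        exact (OrderHomClass.mono e hay).trans (hlower hy))
      (by
        rintro x hx _ ⟨b, rfl⟩ hxb
        exact (hupper hx).trans (OrderHomClass.mono γ hxb))
      (hγ (a ⊔ b)).1
      (isSublattice_latticeClosure.supClosed (subset_latticeClosure (Set.mem_range_self a))
        (subset_latticeClosure (Set.mem_range_self b))) le_rfl
  exact ⟨{ toFun := γ
           map_sup' := fun a b => le_antisymm (hsup a b) (sup_le
            (OrderHomClass.mono γ le_sup_left) (OrderHomClass.mono γ le_sup_right))
           map_inf' := map_inf γ }, hγ⟩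

end Relations

/-! ### Sharp transferability -/

/-- Sharp transferability, with embeddings bundled as injective lattice homomorphisms. -/
def SharplyTransferable (A : Type u) [Lattice A] : Prop :=
  ∀ (L : Type u) [Lattice L] (φ : LatticeHom A (Order.Ideal L)), Function.Injective φ →
    ∃ ξ : LatticeHom A L, ∀ x y, ξ x ∈ φ y ↔ x ≤ y

theorem sharplyTransferable_of_condT {A : Type u} [Lattice A] [BoundedOrder A] [Finite A]
    (hA : CondT A) (hA' : CondT Aᵒᵈ) (hW : WhitmanW A) : SharplyTransferable A := by
  intro L _ φ hφ
  obtain ⟨e, he⟩ := exists_supHom_mem_ideal_iff hA (φ : SupHom A (Order.Ideal L))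
    fun a b => (orderEmbeddingOfInjective φ hφ).le_iff_le.1
  obtain ⟨ξ, hξ⟩ := hW.exists_latticeHom_ge hA' e
  have hR : IsSublattice {x : A × L | x.2 ∈ φ x.1} :=
    { supClosed := fun _ hx _ hy => Order.Ideal.sup_mem (OrderHomClass.mono φ le_sup_left hx)
        (OrderHomClass.mono φ le_sup_right hy)
      infClosed := fun x hx y hy => by
        rw [Set.mem_ofPred_eq, Prod.fst_inf, map_inf]
        exact ⟨(φ x.1).lower inf_le_left hx, (φ y.1).lower inf_le_right hy⟩ }
  have hmem (a : A) : ξ a ∈ φ a :=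
    latticeClosure_min (Set.range_subset_iff.2 fun b => (he b b).2 le_rfl) hR (hξ a).1
  exact ⟨ξ, fun x y => ⟨fun h => (he x y).1 ((φ y).lower (hξ x).2 h),
    fun hxy => OrderHomClass.mono φ hxy (hmem x)⟩⟩

section Bridge

variable {L : Type*} [Lattice L]

theorem isIdealSet_coe (I : Order.Ideal L) : IsIdealSet L (I : Set L) :=
  ⟨I.nonempty, fun _ _ hxy hy => I.lower hxy hy, I.directed⟩

theorem IsIdealSet.exists_ideal_coe_eq {s : Set L} (hs : IsIdealSet L s) :
    ∃ I : Order.Ideal L, (I : Set L) = s :=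
  ⟨⟨⟨s, fun x y hyx hx => hs.2.1 y x hyx hx⟩, hs.1, hs.2.2⟩, rfl⟩

theorem isLeast_coe_ideal_iff {I J K : Order.Ideal L} :
    IsLeast {s : Set L | IsIdealSet L s ∧ (I : Set L) ∪ J ⊆ s} K ↔ K = I ⊔ J := by
  have hsup : IsLeast {s : Set L | IsIdealSet L s ∧ (I : Set L) ∪ J ⊆ s} ↑(I ⊔ J) := by
    refine ⟨⟨isIdealSet_coe _, Set.union_subset (le_sup_left : I ≤ I ⊔ J)
      (le_sup_right : J ≤ I ⊔ J)⟩, ?_⟩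
    rintro s ⟨hs, hIJ⟩
    obtain ⟨K, rfl⟩ := hs.exists_ideal_coe_eq
    exact sup_le (α := Order.Ideal L) (Set.subset_union_left.trans hIJ)
      (Set.subset_union_right.trans hIJ)
  exact ⟨fun h => SetLike.coe_injective (h.unique hsup), fun h => h ▸ hsup⟩

end Bridge

theorem sharplyTransferable_iff_forall_set {A : Type u} [Lattice A] :
    SharplyTransferable A ↔ ∀ (L : Type u) [Lattice L] (φ : A → Set L),
      (∀ x, IsIdealSet L (φ x)) → Function.Injective φ →
      (∀ x y : A, IsLeast {I : Set L | IsIdealSet L I ∧ φ x ∪ φ y ⊆ I} (φ (x ⊔ y))) →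
      (∀ x y : A, φ (x ⊓ y) = φ x ∩ φ y) →
      ∃ ξ : A → L, Function.Injective ξ ∧
        (∀ x y, ξ (x ⊔ y) = ξ x ⊔ ξ y) ∧ (∀ x y, ξ (x ⊓ y) = ξ x ⊓ ξ y) ∧
        ∀ x y : A, ξ x ∈ φ y ↔ x ≤ y := by
  constructor
  · intro h L _ φ hφ hinj hsup hinf
    choose ψ hψ using fun x => (hφ x).exists_ideal_coe_eq
    obtain rfl : (fun x => (ψ x : Set L)) = φ := funext hψ
    obtain ⟨ξ, hξ⟩ := h L
      { toFun := ψ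
        map_sup' := fun x y => isLeast_coe_ideal_iff.1 (hsup x y)
        map_inf' := fun x y => SetLike.coe_injective (hinf x y) }
      fun x y hxy => hinj (congrArg _ hxy)
    refine ⟨ξ, fun x y hxy => eq_of_forall_ge_iff fun z => ?_, map_sup ξ, map_inf ξ, hξ⟩
    rw [← hξ x z, hxy, hξ y z]
  · intro h L _ φ hφ
    obtain ⟨ξ, -, hsup, hinf, hξ⟩ := h L (fun x => φ x) (fun x => isIdealSet_coe _)
      (SetLike.coe_injective.comp hφ) (fun x y => isLeast_coe_ideal_iff.2 (map_sup φ x y))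
      fun x y => congrArg _ (map_inf φ x y)
    exact ⟨{ toFun := ξ, map_sup' := hsup, map_inf' := hinf }, hξ⟩

theorem SharplyTransferable.exists_rightInverse {A L : Type u} [Lattice A] [Lattice L]
    (hA : SharplyTransferable A) (π : LatticeHom L A) (hπ : Function.Surjective π)
    (hlift : ∀ z a b, π z ≤ a ⊔ b → ∃ x y, π x ≤ a ∧ π y ≤ b ∧ z ≤ x ⊔ y) :
    ∃ ξ : LatticeHom A L, Function.RightInverse ξ π := by
  let I (a : A) : Order.Ideal L :=
    { carrier := {z | π z ≤ a}
      lower' := fun x y hyx hx => (OrderHomClass.mono π hyx).trans hx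
      nonempty' := (hπ a).imp fun z hz => hz.le
      directed' := fun x hx y hy =>
        ⟨x ⊔ y, (map_sup π x y).trans_le (sup_le hx hy), le_sup_left, le_sup_right⟩ }
  have hI {a b : A} (hab : I a ≤ I b) : a ≤ b := by
    obtain ⟨z, rfl⟩ := hπ a
    exact hab (le_refl (π z))
  let φ : LatticeHom A (Order.Ideal L) :=
    { toFun := I
      map_sup' := fun a b => le_antisymm
        (fun z hz => by
          obtain ⟨x, y, hx, hy, hz⟩ := hlift z a b hz
          exact Order.Ideal.mem_sup.2 ⟨x, hx, y, hy, hz⟩)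
        (sup_le (fun z hz => le_trans (b := a) hz le_sup_left)
          fun z hz => le_trans (b := b) hz le_sup_right)
      map_inf' := fun a b => SetLike.coe_injective (Set.ext fun z => le_inf_iff) }
  obtain ⟨ξ, hξ⟩ := hA L φ fun a b hab => le_antisymm (hI hab.le) (hI hab.ge)
  refine ⟨ξ, fun a => eq_of_forall_ge_iff fun b => hξ a b⟩

/-! ### Stairs -/

/-- A stair over `A`: a descending sequence of lower sets, eventually `{⊥}`, in which every level
contains the join of the next one. -/
@[ext]
structure Stair (A : Type*) [CompleteLattice A] where
  /-- The lower set at a given level. -/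
  level : ℤ → LowerSet A
  sSup_mem_level : ∀ n, sSup (level (n + 1) : Set A) ∈ level n
  exists_level_eq_bot : ∃ N, ∀ x ∈ level N, x = ⊥

namespace Stair

section Lattice

variable {A : Type*} [CompleteLattice A]

theorem antitone_level (f : Stair A) : Antitone f.level :=
  antitone_int_of_succ_le fun n _ hx => (f.level n).lower (le_sSup hx) (f.sSup_mem_level n)

theorem bot_mem_level (f : Stair A) (n : ℤ) : ⊥ ∈ f.level n :=
  (f.level n).lower bot_le (f.sSup_mem_level n)

/-- The least stair whose levels contain the terms of a given descending sequence: its level `n`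
is generated by the `n`-th term and by the join of the next one. -/
def ofAntitone (F : ℤ → LowerSet A) (hF : Antitone F) (hbot : ∃ N, ∀ x ∈ F N, x = ⊥) :
    Stair A where
  level n := F n ⊔ LowerSet.Iic (sSup (F (n + 1) : Set A))
  sSup_mem_level n := by
    refine Or.inr (sSup_le ?_)
    rintro x (hx | hx)
    · exact le_sSup hx
    · exact hx.trans (sSup_le_sSup (hF (by omega)))
  exists_level_eq_bot := by
    obtain ⟨N, hN⟩ := hbot
    refine ⟨N, ?_⟩
    rintro x (hx | hx)
    · exact hN x hx
    · exact le_bot_iff.1 (hx.trans (sSup_le fun y hy => (hN y (hF (by omega) hy)).le))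

instance : PartialOrder (Stair A) :=
  PartialOrder.lift level fun _ _ => Stair.ext

section OfAntitone

variable {F : ℤ → LowerSet A} {hF : Antitone F} {hbot : ∃ N, ∀ x ∈ F N, x = ⊥}

variable (F) in
theorem le_level_ofAntitone (n : ℤ) : F n ≤ (ofAntitone F hF hbot).level n := le_sup_left

theorem ofAntitone_le_iff {f : Stair A} :
    ofAntitone F hF hbot ≤ f ↔ ∀ n, F n ≤ f.level n :=
  ⟨fun h n => le_sup_left.trans (h n), fun h n => sup_le (h n) fun _ hx =>
    (f.level n).lower (hx.trans (sSup_le_sSup (h (n + 1)))) (f.sSup_mem_level n)⟩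

end OfAntitone

instance : Lattice (Stair A) where
  sup f g := ofAntitone (fun n => f.level n ⊔ g.level n)
    (f.antitone_level.sup g.antitone_level) <| by
      obtain ⟨M, hM⟩ := f.exists_level_eq_bot
      obtain ⟨N, hN⟩ := g.exists_level_eq_bot
      exact ⟨max M N, fun x hx => hx.elim (fun hx => hM x (f.antitone_level (le_max_left M N) hx))
        fun hx => hN x (g.antitone_level (le_max_right M N) hx)⟩
  le_sup_left f g n :=
    le_sup_left.trans (le_level_ofAntitone (fun n => f.level n ⊔ g.level n) n)
  le_sup_right f g n :=
    le_sup_right.trans (le_level_ofAntitone (fun n => f.level n ⊔ g.level n) n)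
  sup_le _ _ _ hf hg := ofAntitone_le_iff.2 fun n => sup_le (hf n) (hg n)
  inf f g :=
    { level := fun n => f.level n ⊓ g.level n
      sSup_mem_level := fun n =>
        ⟨(f.level n).lower (sSup_le_sSup Set.inter_subset_left) (f.sSup_mem_level n),
          (g.level n).lower (sSup_le_sSup Set.inter_subset_right) (g.sSup_mem_level n)⟩
      exists_level_eq_bot := f.exists_level_eq_bot.imp fun _ hN x hx => hN x hx.1 }
  inf_le_left _ _ _ := inf_le_left
  inf_le_right _ _ _ := inf_le_right
  le_inf _ _ _ hf hg n := le_inf (hf n) (hg n)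

theorem level_sup'_le {ι : Type*} (f : ι → Stair A) {I : Finset ι} (hI : I.Nonempty) (n : ℤ) :
    (I.sup' hI f).level n ≤ (⨆ i ∈ I, (f i).level n) ⊔
      LowerSet.Iic (sSup (⨆ i ∈ I, (f i).level (n + 1) : LowerSet A)) := by
  choose N hN using fun i => (f i).exists_level_eq_bot
  have hbot : ∃ N, ∀ x ∈ ⨆ i ∈ I, (f i).level N, x = ⊥ := by
    refine ⟨I.sup' hI N, fun x hx => ?_⟩
    simp only [LowerSet.mem_iSup_iff] at hx
    obtain ⟨i, hi, hx⟩ := hx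
    exact hN i x ((f i).antitone_level (Finset.le_sup' N hi) hx)
  have hle : I.sup' hI f ≤ ofAntitone (fun n => ⨆ i ∈ I, (f i).level n)
      (fun _ _ hmn => iSup₂_mono fun i _ => (f i).antitone_level hmn) hbot :=
    Finset.sup'_le hI f fun i hi n =>
      (le_iSup₂ (f := fun i _ => (f i).level n) i hi).trans
        (le_level_ofAntitone (fun n => ⨆ i ∈ I, (f i).level n) n)
  exact hle n

/-- The stair which is the principal ideal of `a` up to level `N`, and `{⊥}` from there on. -/
def single (a : A) (N : ℤ) : Stair A where
  level n := LowerSet.Iic (if n ≤ N then a else ⊥)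
  sSup_mem_level n := by
    refine LowerSet.mem_Iic_iff.2 (sSup_le fun x hx => hx.trans ?_)
    split_ifs <;> first | omega | simp
  exists_level_eq_bot := ⟨N + 1, fun x hx => by simpa using hx⟩

theorem level_single_of_le (a : A) {n N : ℤ} (h : n ≤ N) :
    (single a N).level n = LowerSet.Iic a := by
  simp [single, h]

theorem level_single_of_lt (a : A) {n N : ℤ} (h : N < n) :
    (single a N).level n = LowerSet.Iic ⊥ := by
  simp [single, h]

/-- The largest element occurring in a stair over a finite lattice, or more generally the join of
all elements occurring in it. -/
def peak (f : Stair A) : A := sSup {x | ∃ n, x ∈ f.level n}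

theorem peak_le_iff {f : Stair A} {a : A} : peak f ≤ a ↔ ∀ n, f.level n ≤ LowerSet.Iic a :=
  sSup_le_iff.trans ⟨fun h n _ hx => h _ ⟨n, hx⟩, fun h _ ⟨n, hx⟩ => h n hx⟩

theorem le_peak {f : Stair A} {n : ℤ} {b : A} (h : b ∈ f.level n) : b ≤ peak f :=
  le_sSup ⟨n, h⟩

theorem peak_mono : Monotone (peak : Stair A → A) := fun _ _ hfg =>
  peak_le_iff.2 fun n _ hx => le_peak (hfg n hx)

theorem peak_sup (f g : Stair A) : peak (f ⊔ g) = peak f ⊔ peak g := by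
  refine le_antisymm (peak_le_iff.2 fun n => ?_)
    (sup_le (peak_mono le_sup_left) (peak_mono le_sup_right))
  have hle (m : ℤ) : f.level m ⊔ g.level m ≤ LowerSet.Iic (peak f ⊔ peak g) :=
    sup_le (fun _ hx => le_sup_of_le_left (le_peak hx)) fun _ hx => le_sup_of_le_right (le_peak hx)
  exact sup_le (hle n) (LowerSet.Iic_le.2 (sSup_le fun _ hx => hle (n + 1) hx))

theorem peak_single (a : A) (N : ℤ) : peak (single a N) = a := by
  refine le_antisymm (peak_le_iff.2 fun n => ?_) (le_peak (n := N) ?_)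
  · rcases le_or_gt n N with h | h
    · exact (level_single_of_le a h).le
    · exact (level_single_of_lt a h).trans_le (LowerSet.Iic_le.2 bot_le)
  · exact (level_single_of_le a le_rfl).ge (Set.self_mem_Iic)

theorem exists_le_single_sup_single {f : Stair A} {a b : A} (h : peak f ≤ a ⊔ b) :
    ∃ N, f ≤ single a N ⊔ single b N := by
  obtain ⟨N, hN⟩ := f.exists_level_eq_bot
  refine ⟨N, fun n => ?_⟩
  rcases lt_or_ge n N with hn | hn
  · refine le_trans (fun x hx => ?_) le_sup_right
    refine ((le_peak hx).trans h).trans (sup_le (le_sSup (Or.inl ?_)) (le_sSup (Or.inr ?_)))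
    · exact (level_single_of_le a hn).ge Set.self_mem_Iic
    · exact (level_single_of_le b hn).ge Set.self_mem_Iic
  · exact fun x hx => hN x (f.antitone_level hn hx) ▸ bot_mem_level _ n

theorem single_inf_single_le {f : Stair A} {a b : A} {n : ℤ} (h : a ⊓ b ∈ f.level n) :
    single a n ⊓ single b n ≤ f := by
  rintro m x ⟨hxa, hxb⟩
  rcases le_or_gt m n with hmn | hnm
  · rw [level_single_of_le _ hmn] at hxa hxb
    exact f.antitone_level hmn ((f.level n).lower (le_inf hxa hxb) h)
  · rw [level_single_of_lt _ hnm] at hxa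
    exact (f.level m).lower hxa (f.bot_mem_level m)

end Lattice

section Peak

variable {A : Type*} [CompleteLattice A] [Finite A]

theorem exists_peak_mem_level (f : Stair A) : ∃ n, peak f ∈ f.level n := by
  have hdir : DirectedOn (· ≤ ·) {x | ∃ n, x ∈ f.level n} := by
    rintro x ⟨m, hx⟩ y ⟨n, hy⟩
    refine ⟨sSup (f.level (min m n - 1 + 1) : Set A), ⟨_, f.sSup_mem_level _⟩, ?_⟩
    rw [sub_add_cancel]
    exact ⟨le_sSup (f.antitone_level (min_le_left m n) hx),
      le_sSup (f.antitone_level (min_le_right m n) hy)⟩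
  obtain ⟨u, ⟨n, hu⟩, hle⟩ :=
    exists_mem_forall_of_directedOn hdir ⟨_, 0, f.sSup_mem_level 0⟩ id
  exact ⟨n, (f.level n).lower (sSup_le fun x hx => hle ⟨x, hx⟩) hu⟩

/-- The projection `Stair.peak` of stairs to `A`, as a lattice homomorphism. -/
def peakHom : LatticeHom (Stair A) A where
  toFun := peak
  map_sup' := peak_sup
  map_inf' f g := by
    obtain ⟨m, hm⟩ := f.exists_peak_mem_level
    obtain ⟨n, hn⟩ := g.exists_peak_mem_level
    refine le_antisymm (le_inf (peak_mono inf_le_left) (peak_mono inf_le_right))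
      (le_peak (n := min m n) ⟨?_, ?_⟩)
    · exact f.antitone_level (min_le_left m n) ((f.level m).lower inf_le_left hm)
    · exact g.antitone_level (min_le_right m n) ((g.level n).lower inf_le_right hn)

theorem succ_level_of_sMinimalPair {ξ : SupHom A (Stair A)} (hξ : ∀ a, peak (ξ a) = a) {p : A}
    {I : Finset A} (h : SMinimalPair A p I) {n : ℤ} (hp : p ∈ (ξ p).level n) {i : A}
    (hi : i ∈ I) : i ∈ (ξ i).level (n + 1) := by
  have le_of_mem {k x : A} {m : ℤ} (hx : x ∈ (ξ k).level m) : x ≤ k := hξ k ▸ le_peak hx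
  let D : LowerSet A := ⨆ k ∈ I, (ξ k).level (n + 1)
  have mem_D {x : A} : x ∈ D ↔ ∃ k ∈ I, x ∈ (ξ k).level (n + 1) := by
    simp [D, LowerSet.mem_iSup_iff]
  obtain ⟨hI, hpI⟩ := h.2.2.2.2.1
  have hle : ξ p ≤ I.sup' hI ξ := (OrderHomClass.mono ξ hpI).trans_eq (map_finset_sup' ξ hI id)
  have hpD : p ≤ sSup (D : Set A) := by
    refine (level_sup'_le ξ hI n (hle n hp)).resolve_left fun hp => ?_
    simp only [SetLike.mem_coe, LowerSet.mem_iSup_iff] at hp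
    obtain ⟨k, hk, hpk⟩ := hp
    exact h.not_le_s4 hk (le_of_mem hpk)
  have hID : (I : Set A) ⊆ D := h.subset_lowerSet
    (fun x hx => (mem_D.1 hx).imp fun k hk => ⟨hk.1, le_of_mem hk.2⟩)
    fun u hu => hpD.trans (sSup_le hu)
  obtain ⟨k, hk, hik⟩ := mem_D.1 (hID hi)
  exact h.isAntichain_s4.eq hi hk (le_of_mem hik) ▸ hik

theorem condT_of_supHom {ξ : SupHom A (Stair A)} (hξ : ∀ a, peak (ξ a) = a) : CondT A := by
  let height (p : A) : ℤ := sSup {n | p ∈ (ξ p).level n}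
  refine condT_iff_exists_isStrictOrder.2
    ⟨InvImage (· < ·) height, { irrefl := fun _ => lt_irrefl _, trans := fun _ _ _ => lt_trans },
      fun p I h i hi => ?_⟩
  have hbdd {q : A} (hq : SJoinIrr A q) : BddAbove {n | q ∈ (ξ q).level n} := by
    obtain ⟨N, hN⟩ := (ξ q).exists_level_eq_bot
    refine ⟨N, fun n hn => le_of_not_gt fun hlt => hq.1 ?_⟩
    exact hN q ((ξ q).antitone_level hlt.le hn) ▸ isBot_bot
  have hp : p ∈ (ξ p).level (height p) :=
    Int.csSup_mem ((ξ p).exists_peak_mem_level.imp fun n hn => by rwa [hξ] at hn) (hbdd h.1)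
  exact Int.lt_of_add_one_le
    (le_csSup (hbdd (h.2.1 i hi)) (succ_level_of_sMinimalPair hξ h hp hi))

end Peak

end Stair

theorem SharplyTransferable.condT {A : Type u} [CompleteLattice A] [Finite A]
    (hA : SharplyTransferable A) : CondT A := by
  obtain ⟨ξ, hξ⟩ := hA.exists_rightInverse Stair.peakHom
    (fun a => ⟨.single a 0, Stair.peak_single a 0⟩) fun f a b h =>
      have ⟨N, hN⟩ := Stair.exists_le_single_sup_single h
      ⟨.single a N, .single b N, (Stair.peak_single a N).le, (Stair.peak_single b N).le, hN⟩
  exact Stair.condT_of_supHom (ξ := ξ) hξ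

open OrderDual in
theorem SharplyTransferable.condT_dual {A : Type u} [CompleteLattice A] [Finite A]
    (hA : SharplyTransferable A) : CondT Aᵒᵈ := by
  have peak_single_toDual (a : A) (n : ℤ) :
      ofDual (Stair.peak (Stair.single (toDual a) n)) = a := Stair.peak_single (toDual a) n
  obtain ⟨ξ, hξ⟩ := hA.exists_rightInverse (L := (Stair Aᵒᵈ)ᵒᵈ) (LatticeHom.dual Stair.peakHom)
    (fun a => ⟨toDual (.single (toDual a) 0), peak_single_toDual a 0⟩) fun f a b h =>
      have ⟨n, hn⟩ := (ofDual f).exists_peak_mem_level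
      ⟨toDual (.single (toDual a) n), toDual (.single (toDual b) n),
        (peak_single_toDual a n).le, (peak_single_toDual b n).le,
        Stair.single_inf_single_le (((ofDual f).level n).lower h hn)⟩
  let η : SupHom Aᵒᵈ (Stair Aᵒᵈ) :=
    { toFun := fun a => ofDual (ξ (ofDual a))
      map_sup' := fun a b => congrArg ofDual (map_inf ξ (ofDual a) (ofDual b)) }
  exact Stair.condT_of_supHom (ξ := η) hξ

/-! ### Failures of Whitman's condition -/

/-- A failure `x ⊓ y ≤ u ⊔ v` of Whitman's condition. -/
structure WhitmanFailure {A : Type*} [Lattice A] (u v x y : A) : Prop where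
  inf_le_sup : x ⊓ y ≤ u ⊔ v
  not_inf_le_left : ¬ x ⊓ y ≤ u
  not_inf_le_right : ¬ x ⊓ y ≤ v
  not_left_le_sup : ¬ x ≤ u ⊔ v
  not_right_le_sup : ¬ y ≤ u ⊔ v

namespace WhitmanFailure

variable {A : Type*} [Lattice A] {u v x y : A}

theorem symm (h : WhitmanFailure u v x y) : WhitmanFailure u v y x where
  inf_le_sup := inf_comm x y ▸ h.inf_le_sup
  not_inf_le_left := inf_comm x y ▸ h.not_inf_le_left
  not_inf_le_right := inf_comm x y ▸ h.not_inf_le_right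
  not_left_le_sup := h.not_right_le_sup
  not_right_le_sup := h.not_left_le_sup

theorem sup_right_or_inf_left (h : WhitmanFailure u v x y) :
    WhitmanFailure u v (y ⊔ (u ⊔ v)) x ∨ WhitmanFailure u v (x ⊓ (y ⊔ (u ⊔ v))) y := by
  by_cases hle : (y ⊔ (u ⊔ v)) ⊓ x ≤ u ⊔ v
  · have hxy : x ⊓ y ≤ (y ⊔ (u ⊔ v)) ⊓ x := le_inf (inf_le_right.trans le_sup_left) inf_le_left
    exact Or.inl
      { inf_le_sup := hle
        not_inf_le_left := fun h' => h.not_inf_le_left (hxy.trans h')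
        not_inf_le_right := fun h' => h.not_inf_le_right (hxy.trans h')
        not_left_le_sup := fun h' => h.not_right_le_sup (le_sup_left.trans h')
        not_right_le_sup := h.not_left_le_sup }
  · have hxy : x ⊓ (y ⊔ (u ⊔ v)) ⊓ y = x ⊓ y := by rw [inf_assoc, inf_comm _ y, inf_sup_self]
    exact Or.inr
      { inf_le_sup := hxy ▸ h.inf_le_sup
        not_inf_le_left := hxy ▸ h.not_inf_le_left
        not_inf_le_right := hxy ▸ h.not_inf_le_right
        not_left_le_sup := inf_comm x _ ▸ hle
        not_right_le_sup := h.not_right_le_sup }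

theorem exists_sup_le_left [Finite A] [OrderBot A] (hA : CondT A) (h : WhitmanFailure u v x y) :
    ∃ x' y', WhitmanFailure u v x' y' ∧ u ⊔ v ≤ x' := by
  obtain ⟨⟨x₀, y₀⟩, -, hmin⟩ := exists_minimal_le_of_wellFoundedLT
    (fun z : A × A => WhitmanFailure u v z.1 z.2) (x, y) h
  have h₀ : WhitmanFailure u v x₀ y₀ := hmin.prop
  rcases h₀.sup_right_or_inf_left with h' | hx
  · exact ⟨_, _, h', le_sup_right⟩
  rcases h₀.symm.sup_right_or_inf_left with h' | hy
  · exact ⟨_, _, h', le_sup_right⟩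
  have hx₀ : x₀ ≤ y₀ ⊔ (u ⊔ v) :=
    (hmin.le_of_le (y := (_, y₀)) hx ⟨inf_le_left, le_rfl⟩).1.trans inf_le_right
  have hy₀ : y₀ ≤ x₀ ⊔ (u ⊔ v) :=
    (hmin.le_of_le (y := (x₀, _)) hy.symm ⟨le_rfl, inf_le_left⟩).2.trans inf_le_right
  have hsup : x₀ ⊔ (u ⊔ v) = y₀ ⊔ (u ⊔ v) :=
    le_antisymm (sup_le hx₀ le_sup_right) (sup_le hy₀ le_sup_right)
  refine absurd ?_ h₀.not_left_le_sup
  calc x₀ ≤ x₀ ⊔ (u ⊔ v) := le_sup_left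
    _ = x₀ ⊓ y₀ ⊔ (u ⊔ v) := (hA.inf_sup_eq_of_sup_eq hsup).symm
    _ = u ⊔ v := sup_eq_right.2 h₀.inf_le_sup

end WhitmanFailure

theorem WhitmanW.of_forall_not_whitmanFailure {A : Type*} [Lattice A]
    (h : ∀ u v x y : A, ¬ WhitmanFailure u v x y) : WhitmanW A := by
  intro x y u v hle
  by_contra! hne
  exact h u v x y ⟨hle, hne.1, hne.2.1, hne.2.2.1, hne.2.2.2⟩

/-! ### Towers -/

/-- A point of `A` together with a level. Over a point of `C` the levels are the cells
`{0}, {1}, {2}, …` of `ℕ`, over any other point they are the cells `{0, 1}, {2, 3}, …`. A point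
above `y` has only one level, at infinity, encoded as `0`. -/
@[ext]
structure Tower {A : Type*} [LE A] (C : Set A) (y : A) where
  /-- The underlying point. -/
  pt : A
  /-- The index of the cell. -/
  level : ℕ
  level_eq_zero : y ≤ pt → level = 0

namespace Tower

section Cells

open Classical in
/-- The size of the cells over a point. -/
noncomputable def width {A : Type*} (C : Set A) (s : A) : ℕ := if s ∈ C then 1 else 2

theorem width_of_mem {A : Type*} {C : Set A} {s : A} (hs : s ∈ C) : width C s = 1 := if_pos hs

theorem width_of_notMem {A : Type*} {C : Set A} {s : A} (hs : s ∉ C) : width C s = 2 := if_neg hs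

variable {A : Type*} [LE A] {C : Set A} {y : A}

/-- The first element of the cell of `z`. -/
noncomputable def first (z : Tower C y) : ℕ := width C z.pt * z.level

open Classical in
/-- The last element of the cell of `z`, or infinity if `z` lies over a point above `y`. -/
noncomputable def last (z : Tower C y) : ℕ∞ :=
  if y ≤ z.pt then ⊤ else ((z.first + (width C z.pt - 1) : ℕ) : ℕ∞)

theorem last_eq_top {z : Tower C y} : z.last = ⊤ ↔ y ≤ z.pt := by
  simp [last]

theorem last_of_not_le {z : Tower C y} (hz : ¬ y ≤ z.pt) :
    z.last = ((z.first + (width C z.pt - 1) : ℕ) : ℕ∞) := if_neg hz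

theorem last_le_first_add_one {z : Tower C y} (hz : ¬ y ≤ z.pt) : z.last ≤ z.first + 1 := by
  rw [last_of_not_le hz, width]
  split_ifs <;> simp

theorem last_of_mem {z : Tower C y} (hC : z.pt ∈ C) (hz : ¬ y ≤ z.pt) : z.last = z.first := by
  simp [last_of_not_le hz, width_of_mem hC]

theorem last_of_notMem {z : Tower C y} (hC : z.pt ∉ C) (hz : ¬ y ≤ z.pt) :
    z.last = ((2 * z.level + 1 : ℕ) : ℕ∞) := by
  simp [last_of_not_le hz, first, width_of_notMem hC]

theorem even_first {z : Tower C y} (hC : z.pt ∉ C) : Even z.first := by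
  simp [first, width_of_notMem hC]

open Classical in
/-- The element over `s` whose cell contains `M`. -/
noncomputable def floor (C : Set A) (y s : A) (M : ℕ∞) : Tower C y where
  pt := s
  level := if y ≤ s then 0 else M.toNat / width C s
  level_eq_zero h := if_pos h

theorem first_floor {s : A} (hs : ¬ y ≤ s) (M : ℕ∞) :
    (floor C y s M).first = width C s * (M.toNat / width C s) := by
  simp [first, floor, hs]

theorem first_floor_of_mem {s : A} (hC : s ∈ C) (hs : ¬ y ≤ s) (M : ℕ∞) :
    (floor C y s M).first = M.toNat := by
  simp [first_floor hs, width_of_mem hC]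

theorem first_floor_le (s : A) (M : ℕ∞) : (floor C y s M).first ≤ M := by
  by_cases hs : y ≤ s
  · simp [first, floor, hs]
  · rw [first_floor hs]
    exact (Nat.cast_le.2 (Nat.mul_div_le _ _)).trans M.natCast_toNat_le_self

theorem le_last_floor {s : A} {M : ℕ∞} (hM : M = ⊤ → y ≤ s) : M ≤ (floor C y s M).last := by
  by_cases hs : y ≤ s
  · exact (last_eq_top.2 hs : (floor C y s M).last = ⊤).symm ▸ le_top
  · lift M to ℕ using fun h => hs (hM h)
    rw [last_of_not_le hs, first_floor hs, Nat.cast_le]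
    change M ≤ width C s * (M / width C s) + (width C s - 1)
    unfold width
    split_ifs <;> omega

end Cells

section Lattice

variable {A : Type*} [Lattice A] {C : Set A} [C.OrdConnected] {y : A}

instance : PartialOrder (Tower C y) where
  le z w := z.pt ≤ w.pt ∧ z.first ≤ w.last
  le_refl z := by
    refine ⟨le_rfl, ?_⟩
    by_cases hz : y ≤ z.pt
    · simp [last_eq_top.2 hz]
    · rw [last_of_not_le hz, Nat.cast_le]
      exact Nat.le_add_right _ _
  le_trans z w r := by
    rintro ⟨hzw, hzw'⟩ ⟨hwr, hwr'⟩
    refine ⟨hzw.trans hwr, ?_⟩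
    by_cases hr : y ≤ r.pt
    · simp [last_eq_top.2 hr]
    have hw : ¬ y ≤ w.pt := fun h => hr (h.trans hwr)
    rw [last_of_not_le hw, Nat.cast_le] at hzw'
    rw [last_of_not_le hr, Nat.cast_le] at hwr' ⊢
    -- Otherwise the cell of `r` ends, and the cell of `z` starts, strictly inside that of `w`, so
    -- that `z.pt, r.pt ∈ C` and `w.pt ∉ C`.
    have hC : z.pt ∈ C → r.pt ∈ C → w.pt ∈ C := fun hz hr => Set.Icc_subset C hz hr ⟨hzw, hwr⟩
    simp only [first, width] at *
    grind
  le_antisymm z w := by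
    rintro ⟨hzw, hzw'⟩ ⟨hwz, hwz'⟩
    have hpt : z.pt = w.pt := le_antisymm hzw hwz
    refine Tower.ext hpt ?_
    by_cases hw : y ≤ w.pt
    · rw [z.level_eq_zero (hpt ▸ hw), w.level_eq_zero hw]
    rw [last_of_not_le hw, Nat.cast_le] at hzw'
    rw [last_of_not_le (hpt ▸ hw), Nat.cast_le] at hwz'
    by_cases hC : w.pt ∈ C
    · simp only [first, hpt, width_of_mem hC] at hzw' hwz'
      omega
    · simp only [first, hpt, width_of_notMem hC] at hzw' hwz'
      omega

noncomputable instance : Lattice (Tower C y) where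
  sup z w := floor C y (z.pt ⊔ w.pt) (max z.first w.first : ℕ)
  le_sup_left z w := ⟨le_sup_left, le_trans (by simp) (le_last_floor (by simp))⟩
  le_sup_right z w := ⟨le_sup_right, le_trans (by simp) (le_last_floor (by simp))⟩
  sup_le z w r hz hw := by
    refine ⟨sup_le hz.1 hw.1, (first_floor_le _ _).trans ?_⟩
    exact (Nat.mono_cast.map_max ..).trans_le (max_le hz.2 hw.2)
  inf z w := floor C y (z.pt ⊓ w.pt) (min z.last w.last)
  inf_le_left z w := ⟨inf_le_left, (first_floor_le _ _).trans (min_le_left _ _)⟩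
  inf_le_right z w := ⟨inf_le_right, (first_floor_le _ _).trans (min_le_right _ _)⟩
  le_inf r z w hz hw := ⟨le_inf hz.1 hw.1, (le_min hz.2 hw.2).trans <| le_last_floor fun h =>
    le_inf (last_eq_top.1 (min_eq_top.1 h).1) (last_eq_top.1 (min_eq_top.1 h).2)⟩

theorem le_iff {z w : Tower C y} : z ≤ w ↔ z.pt ≤ w.pt ∧ z.first ≤ w.last := Iff.rfl

variable (C y) in
/-- The projection of a tower to its underlying lattice. -/
def ptHom : LatticeHom (Tower C y) A where
  toFun := pt
  map_sup' _ _ := rfl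
  map_inf' _ _ := rfl

theorem first_sup {z w : Tower C y} (hC : z.pt ⊔ w.pt ∈ C) (hy : ¬ y ≤ z.pt ⊔ w.pt) :
    (z ⊔ w).first = max z.first w.first := first_floor_of_mem hC hy _

theorem first_inf {z w : Tower C y} (hC : z.pt ⊓ w.pt ∈ C) (hz : ¬ y ≤ z.pt) (hw : y ≤ w.pt) :
    (z ⊓ w).first = z.last := by
  have : (z ⊓ w).first = (min z.last w.last).toNat :=
    first_floor_of_mem hC (fun h => hz (h.trans inf_le_left)) _
  rw [this, last_eq_top.2 hw, min_top_right, ENat.natCast_toNat (last_eq_top.not.2 hz)]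

theorem exists_le_sup {z : Tower C y} {s t : A} (h : z.pt ≤ s ⊔ t) :
    ∃ v w : Tower C y, v.pt = s ∧ w.pt = t ∧ z ≤ v ⊔ w := by
  let lift (r : A) : Tower C y := floor C y r (z.first + 1)
  refine ⟨lift s, lift t, rfl, rfl, h, ?_⟩
  by_cases hst : y ≤ s ⊔ t
  · exact (last_eq_top.2 hst : (lift s ⊔ lift t).last = ⊤).symm ▸ le_top
  have hs : ¬ y ≤ s := fun h => hst (le_sup_of_le_left h)
  have hle : (z.first : ℕ∞) + 1 ≤ (lift s).first + 1 :=
    (le_last_floor (by simp)).trans (last_le_first_add_one hs)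
  exact (WithTop.le_of_add_le_add_right ENat.one_ne_top hle).trans
    (le_iff.1 (le_sup_left : lift s ≤ lift s ⊔ lift t)).2

end Lattice

theorem not_whitmanFailure_of_rightInverse {A : Type*} [Lattice A] {u v x y : A}
    {ξ : LatticeHom A (Tower (Set.Icc (x ⊓ y) (u ⊔ v)) y)}
    (hξ : Function.RightInverse ξ (ptHom _ _)) (hx : u ⊔ v ≤ x) : ¬ WhitmanFailure u v x y := by
  intro h
  have hpt (s : A) : (ξ s).pt = s := hξ s
  have ha : x ⊓ y ∈ Set.Icc (x ⊓ y) (u ⊔ v) := ⟨le_rfl, h.inf_le_sup⟩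
  have hb : u ⊔ v ∈ Set.Icc (x ⊓ y) (u ⊔ v) := ⟨h.inf_le_sup, le_rfl⟩
  have hyx : ¬ y ≤ x := fun hyx => h.not_right_le_sup (inf_eq_right.2 hyx ▸ h.inf_le_sup)
  have hfirst_a : ((ξ (x ⊓ y)).first : ℕ∞) = (ξ x).last := by
    rw [map_inf, first_inf] <;> simp only [hpt, ha, hyx, le_rfl, not_false_eq_true]
  have hfirst_b : (ξ (u ⊔ v)).first = max (ξ u).first (ξ v).first := by
    rw [map_sup, first_sup] <;> simp only [hpt, hb, h.not_right_le_sup, not_false_eq_true]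
  have hlast_x : (ξ x).last = ((2 * (ξ x).level + 1 : ℕ) : ℕ∞) :=
    last_of_notMem (by rw [hpt]; exact fun hC => h.not_left_le_sup hC.2) (by rwa [hpt])
  have hlast_b : (ξ (u ⊔ v)).last = (ξ (u ⊔ v)).first :=
    last_of_mem (by rwa [hpt]) (by rw [hpt]; exact h.not_right_le_sup)
  have hu : Even (ξ u).first := even_first (by rw [hpt]; exact fun hC => h.not_inf_le_left hC.1)
  have hv : Even (ξ v).first := even_first (by rw [hpt]; exact fun hC => h.not_inf_le_right hC.1)
  have hab := (le_iff.1 (OrderHomClass.mono ξ h.inf_le_sup)).2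
  have hbx := (le_iff.1 (OrderHomClass.mono ξ hx)).2
  rw [hlast_b, hfirst_a, hlast_x, Nat.cast_le, hfirst_b] at hab
  rw [hlast_x, Nat.cast_le, hfirst_b] at hbx
  rw [Nat.even_iff] at hu hv
  omega

end Tower

theorem SharplyTransferable.whitmanW {A : Type u} [Lattice A] [OrderBot A] [Finite A]
    (hA : SharplyTransferable A) (hT : CondT A) : WhitmanW A := by
  refine .of_forall_not_whitmanFailure fun u v x y h => ?_
  obtain ⟨x, y, h, hx⟩ := h.exists_sup_le_left hT
  obtain ⟨ξ, hξ⟩ := hA.exists_rightInverse (Tower.ptHom (Set.Icc (x ⊓ y) (u ⊔ v)) y)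
    (fun s => ⟨Tower.floor _ y s 0, rfl⟩) fun z s t hz =>
      have ⟨v, w, hv, hw, hz⟩ := Tower.exists_le_sup hz
      ⟨v, w, hv.le, hw.le, hz⟩
  exact Tower.not_whitmanFailure_of_rightInverse hξ hx h

/-- A finite lattice `A` is sharply transferable (for every lattice `L` and every
lattice embedding `φ : A → Id L`—join of two ideals being the least ideal containing
their union, meet being intersection—there exists a lattice embedding `ξ : A → L`
with `ξ x ∈ φ y ↔ x ≤ y`) if and only if `A` satisfies (T∨), (T∧), and (W). -/
theorem sharplyTransferable_iff_TjTmW (A : Type u) [Lattice A] [Fintype A] :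
    (∀ (L : Type u) [Lattice L] (φ : A → Set L),
        (∀ x, IsIdealSet L (φ x)) →
        Function.Injective φ →
        (∀ x y : A, IsLeast {I : Set L | IsIdealSet L I ∧ φ x ∪ φ y ⊆ I} (φ (x ⊔ y))) →
        (∀ x y : A, φ (x ⊓ y) = φ x ∩ φ y) →
        ∃ ξ : A → L, Function.Injective ξ ∧
          (∀ x y, ξ (x ⊔ y) = ξ x ⊔ ξ y) ∧ (∀ x y, ξ (x ⊓ y) = ξ x ⊓ ξ y) ∧
          ∀ x y : A, ξ x ∈ φ y ↔ x ≤ y) ↔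
    (CondT A ∧ CondT Aᵒᵈ ∧ WhitmanW A) := by
  rw [← sharplyTransferable_iff_forall_set]
  rcases isEmpty_or_nonempty A with _ | _
  · have : IsEmpty Aᵒᵈ := ‹IsEmpty A›
    exact iff_of_true (fun L _ φ _ => ⟨⟨⟨isEmptyElim, isEmptyElim⟩, isEmptyElim⟩, isEmptyElim⟩)
      ⟨condT_of_isEmpty, condT_of_isEmpty, fun x => isEmptyElim x⟩
  · let _ : BoundedOrder A := Fintype.toBoundedOrder A
    let _ : CompleteLattice A := Fintype.toCompleteLattice A
    exact ⟨fun h => ⟨h.condT, h.condT_dual, h.whitmanW h.condT⟩,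
      fun ⟨hA, hA', hW⟩ => sharplyTransferable_of_condT hA hA' hW⟩
end
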